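/- For every ε > 0 there exists N such that for all n ≥ N, every finite abelian group G of order n, and every function f : {1,…,n} → G with Σ_{i=1}^n f(i) = ΣG, the number T of additive f-triples, i.e. triples (π₁, π₂, π₃) ∈ S³ with π₁ + π₂ + π₃ = f, satisfies |T · n^{n−1}/(n!)³ − 𝔖(f)| ≤ ε, where 𝔖(f) = exp( −(1/(2n²)) Σ_{x∈G} |f^{−1}(x)|² ). -/

import Mathlib

/-!
The number `T` of triples is evaluated by Fourier analysis on `G ^ n`. Let `fc χ` be the Fourier
coefficient at `χ = (χ i)ᵢ` of the indicator function of the set of bijections, divided by `n!`.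
Then `T n ^ n / n!³ = ∑ χ, fc χ ^ 3 ∏ i, χ i (-f i)` (`sum_tm`). Because `Σ f = ΣG` and `2 ΣG = 0`,
the summand does not change when all `χ i` are shifted by a common character (`tm_shift`). Hence the
words `χ` in which a single letter fills more than 99.9% of the slots contribute `n` times the sum
over words with small support (`sum_tm_split`), and it suffices to prove three things.

* The remaining, spread words contribute `o(1)` (`sum_spread_le`). The coefficient `fc χ` is bounded
  in terms of the multiplicities of the letters of `χ` by extracting a coefficient of
  `∏ x, ∑ ψ, t ψ * ψ x`, which is small on a torus by Parseval and AM–GM (`norm_sum_word_le`);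
  summed over all types this gives a product of one-letter generating functions (`sum_cube_types`).

* The words with support of size `m` contribute geometrically little in `m` for `48 ≤ m ≤ n / 1000`
  (`bb_tail`). Above `K √n` this follows from the same type bound (`sum_medium_le`). Below,
  `∑ ‖fc χ‖³` is estimated by Parseval for words with a given support (`parseval`) and by uniform
  bounds for `fc` (`norm_fc_le_dd`, `norm_fc_le_spread`) which come from the recursion `fc_merge`.
  That recursion expresses `fc χ` through the coefficients of words in which two letters have been
  merged into one slot.

* For each fixed `m`, the sum `lev f m` of the terms with support of size `m` converges. In the cube
  of the merge recursion only pairs of slots with cancelling letters `ψ`, `-ψ` matter, and summing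
  over `ψ` detects `f i = f j`. This yields `(m + 2) lev f (m + 2) ≈ -2 s lev f m` with
  `s = ∑ x, |f⁻¹(x)|² / (2 n²)` (`level_rec`), while `lev f 0 = 1` and `lev f 1 = 0`. So
  `lev f (2 k) → (-s) ^ k / k!` and `lev f m → 0` for odd `m` (`lev_approx`).

Summing over `m` gives `exp (-s)`.
-/

open Finset

/-- The number of preimages of `x` under `f`. -/
noncomputable def fiberCard {α β : Type*} [Fintype α] (f : α → β) (x : β) : ℕ := by
  classical exact (Finset.univ.filter (fun i => f i = x)).card

set_option linter.unusedSectionVars false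

noncomputable section
namespace AddTriples

variable {ι G : Type} [Fintype ι] [DecidableEq ι] [AddCommGroup G] [Fintype G] [DecidableEq G]

/-! ### Fourier coefficients of the set of bijections and the merge recursion -/

/-- The Fourier coefficient, at the character `(χ i)ᵢ` of `G ^ ι`, of the indicator function of the
set of bijections `ι → G`, normalised by `n!` so that the trivial character gives `1`. -/
def fc (χ : ι → AddChar G ℂ) : ℂ :=
  (∑ π : ι ≃ G, ∏ i, χ i (π i)) / ((Fintype.card G).factorial : ℂ)

/-- The indices carrying a nontrivial character. Characters form an additive group in Mathlib, so
the trivial one is `0`. -/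
def supp (χ : ι → AddChar G ℂ) : Finset ι := univ.filter fun i => χ i ≠ 0

lemma mem_supp {χ : ι → AddChar G ℂ} {i : ι} : i ∈ supp χ ↔ χ i ≠ 0 := by simp [supp]

/-- The word obtained from `χ` by moving `χ i` to slot `j`: slot `j` carries `χ i + χ j`, slot `i`
the trivial character. -/
def merge (χ : ι → AddChar G ℂ) (i j : ι) : ι → AddChar G ℂ :=
  Function.update (Function.update χ i 0) j (χ i + χ j)

lemma merge_left (χ : ι → AddChar G ℂ) {i j : ι} (h : i ≠ j) : merge χ i j i = 0 := by
  simp [merge, h]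

lemma merge_right (χ : ι → AddChar G ℂ) (i j : ι) : merge χ i j j = χ i + χ j := by
  simp [merge]

lemma merge_of_ne (χ : ι → AddChar G ℂ) {i j l : ι} (hi : l ≠ i) (hj : l ≠ j) :
    merge χ i j l = χ l := by
  simp [merge, hi, hj]

/-- Composing `π` with the transposition of `i` and `k` moves the argument of `χ i` back to `π i`,
and changes no other factor when `χ k` is trivial. -/
lemma sum_swap_eq (χ : ι → AddChar G ℂ) (i k : ι) (hk : k = i ∨ χ k = 0) :
    ∑ π : ι ≃ G, (∏ l ∈ univ.erase i, χ l (π l)) * χ i (π k) =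
      ∑ π : ι ≃ G, ∏ l, χ l (π l) := by
  rcases hk with rfl | hk
  · refine Finset.sum_congr rfl fun π _ => ?_
    rw [Finset.prod_erase_mul _ _ (mem_univ _)]
  · by_cases hki : k = i
    · subst hki
      refine Finset.sum_congr rfl fun π _ => ?_
      rw [Finset.prod_erase_mul _ _ (mem_univ _)]
    rw [← Equiv.sum_comp (Equiv.equivCongr (Equiv.swap i k) (Equiv.refl G))]
    refine Finset.sum_congr rfl fun π _ => ?_
    rw [← Finset.prod_erase_mul _ _ (mem_univ i)]
    congr 1
    · refine Finset.prod_congr rfl fun l hl => ?_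
      have hli : l ≠ i := by simpa using hl
      by_cases hlk : l = k
      · subst hlk; simp [hk]
      · simp [Equiv.swap_apply_of_ne_of_ne hli hlk]
    · simp

lemma sum_merge_eq (χ : ι → AddChar G ℂ) {i j : ι} (h : i ≠ j) :
    ∑ π : ι ≃ G, (∏ l ∈ univ.erase i, χ l (π l)) * χ i (π j) =
      ∑ π : ι ≃ G, ∏ l, merge χ i j l (π l) := by
  refine Finset.sum_congr rfl fun π _ => ?_
  rw [← Finset.mul_prod_erase univ (fun l => merge χ i j l (π l)) (mem_univ i), merge_left _ h]
  have hj : j ∈ univ.erase i := by simp [h.symm]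
  rw [← Finset.mul_prod_erase _ _ hj, ← Finset.mul_prod_erase _ _ hj, merge_right]
  simp only [AddChar.zero_apply, AddChar.add_apply, one_mul]
  have : ∏ x ∈ (univ.erase i).erase j, (merge χ i j x) (π x) =
      ∏ x ∈ (univ.erase i).erase j, (χ x) (π x) := by
    refine Finset.prod_congr rfl fun l hl => ?_
    simp only [mem_erase, mem_univ, and_true] at hl
    rw [merge_of_ne _ hl.2 hl.1]
  rw [this]; ring

/-- The merge recursion. Since `χ i ≠ 0`, replacing `χ i (π i)` by `χ i (π k)` and summing over all
slots `k` gives `0`. The `n - |supp χ| + 1` slots with `k = i` or `χ k = 0` each contribute `fc χ`,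
and a slot `j ≠ i` of the support contributes `fc (merge χ i j)`. -/
lemma fc_merge (χ : ι → AddChar G ℂ) (hc : Fintype.card ι = Fintype.card G) {i : ι}
    (hi : i ∈ supp χ) :
    ((Fintype.card G : ℂ) - (supp χ).card + 1) * fc χ =
      - ∑ j ∈ (supp χ).erase i, fc (merge χ i j) := by
  have h0 : ∑ k, ∑ π : ι ≃ G, (∏ l ∈ univ.erase i, χ l (π l)) * χ i (π k) = 0 := by
    rw [Finset.sum_comm]
    refine Finset.sum_eq_zero fun π _ => ?_
    rw [← Finset.mul_sum, Equiv.sum_comp π (fun x => χ i x),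
      (AddChar.sum_eq_zero_iff_ne_zero).2 (mem_supp.1 hi), mul_zero]
  rw [← Finset.sum_sdiff (subset_univ ((supp χ).erase i))] at h0
  have h1 : ∑ k ∈ univ \ (supp χ).erase i,
      ∑ π : ι ≃ G, (∏ l ∈ univ.erase i, χ l (π l)) * χ i (π k) =
      ((Fintype.card G : ℂ) - (supp χ).card + 1) * ∑ π : ι ≃ G, ∏ l, χ l (π l) := by
    rw [Finset.sum_congr rfl (g := fun _ => ∑ π : ι ≃ G, ∏ l, χ l (π l))]
    · rw [Finset.sum_const, nsmul_eq_mul]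
      congr 1
      have hs := Finset.card_sdiff_add_card_eq_card (subset_univ ((supp χ).erase i))
      rw [Finset.card_erase_of_mem hi, card_univ, hc] at hs
      have hp : 0 < (supp χ).card := Finset.card_pos.2 ⟨i, hi⟩
      have : (univ \ (supp χ).erase i).card + (supp χ).card = Fintype.card G + 1 := by omega
      have h2 : ((univ \ (supp χ).erase i).card : ℂ) + (supp χ).card = Fintype.card G + 1 := by
        exact_mod_cast this
      linear_combination h2
    · intro k hk
      refine sum_swap_eq χ i k ?_
      simp only [mem_sdiff, mem_univ, mem_erase, true_and, not_and, mem_supp] at hk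
      by_cases hki : k = i
      · exact Or.inl hki
      · exact Or.inr (by simpa using hk hki)
  have h2 : ∑ k ∈ (supp χ).erase i,
      ∑ π : ι ≃ G, (∏ l ∈ univ.erase i, χ l (π l)) * χ i (π k) =
      ∑ j ∈ (supp χ).erase i, ∑ π : ι ≃ G, ∏ l, merge χ i j l (π l) := by
    refine Finset.sum_congr rfl fun j hj => ?_
    exact sum_merge_eq χ (fun h => by simp [h] at hj)
  rw [h1, h2] at h0
  simp only [fc]
  rw [← Finset.sum_div, ← neg_div, ← mul_div_assoc]
  congr 1
  linear_combination h0

lemma fc_zero (hc : Fintype.card ι = Fintype.card G) : fc (0 : ι → AddChar G ℂ) = 1 := by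
  have e : Nonempty (ι ≃ G) := Fintype.card_eq.1 hc
  obtain ⟨e⟩ := e
  simp only [fc, Pi.zero_apply, AddChar.zero_apply, prod_const_one, sum_const, nsmul_eq_mul,
    mul_one, card_univ, Fintype.card_equiv e, hc]
  exact div_self (by exact_mod_cast (Nat.factorial_ne_zero _))

/-! ### Finite differences -/

/-- `fd n k x` is the `k`-th forward difference at `x` of `x ↦ n ^ x (n - x)! / n!`. -/
def fd (n : ℕ) : ℕ → ℕ → ℝ
  | 0, x => (n : ℝ) ^ x * (n - x).factorial / n.factorial
  | k + 1, x => fd n k (x + 1) - fd n k x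

lemma fd_rec (n : ℕ) : ∀ k x : ℕ, x + k < n →
    ((n : ℝ) - x) * fd n (k + 1) x - k * fd n k (x + 1) =
      x * fd n k x + k * fd n (k - 1) (x + 1) := by
  intro k
  induction k with
  | zero =>
    intro x hx
    simp only [fd]
    have h : n - x = (n - (x + 1)) + 1 := by omega
    have h2 : ((n - (x+1) : ℕ) : ℝ) = n - x - 1 := by
      rw [Nat.cast_sub (by omega)]; push_cast; ring
    rw [h, Nat.factorial_succ]
    have := Nat.factorial_ne_zero n
    push_cast
    rw [h2]
    field_simp
    ring
  | succ k ih =>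
    intro x hx
    have a1 := ih (x + 1) (by omega)
    have a2 := ih x (by omega)
    have e1 : fd n (k + 1 + 1) x = fd n (k+1) (x+1) - fd n (k+1) x := rfl
    have e2 : fd n (k + 1) (x+1) = fd n k (x+1+1) - fd n k (x+1) := rfl
    have e3 : fd n (k + 1) x = fd n k (x+1) - fd n k x := rfl
    rw [e1]
    push_cast at a1 a2 ⊢
    try simp only [Nat.add_sub_cancel]
    rcases k with _ | k
    · simp at a1 a2 ⊢
      rw [e2] at a1
      rw [e3] at a2
      rw [e2, e3]
      linear_combination a1 - a2
    · have e4 : fd n (k + 1) (x+1) = fd n k (x+1+1) - fd n k (x+1) := rfl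
      simp only [Nat.add_sub_cancel] at a1 a2
      push_cast at a1 a2 ⊢
      rw [e2] at a1 ⊢
      rw [e3] at a2 ⊢
      linear_combination a1 - a2 - (k+1) * e4

/-- The `m`-th forward difference of `x ↦ n ^ x (n - x)! / n!` at `0`. It is the `ℓ²`-mass of the
Fourier coefficients with a given support of size `m` (`parseval`), and also a uniform bound for
each of them (`norm_fc_le_dd`). -/
def dd (n m : ℕ) : ℝ := fd n m 0

lemma dd_zero (n : ℕ) : dd n 0 = 1 := by
  have := Nat.factorial_ne_zero n
  simp [dd, fd, this]

lemma dd_one (n : ℕ) (hn : 0 < n) : dd n 1 = 0 := by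
  have h := fd_rec n 0 0 (by omega)
  simp at h
  rcases h with h | h
  · omega
  · exact h

/-- The recursion satisfied by `dd`. Up to the factor `2` it is the merge recursion `fc_merge` with
every merged coefficient replaced by its bound, which is what makes `norm_fc_le_dd` work. -/
lemma dd_rec (n m : ℕ) (h : m + 2 ≤ n) :
    ((n : ℝ) - m - 1) * dd n (m + 2) = (m + 1) * (2 * dd n (m + 1) + dd n m) := by
  have a := fd_rec n (m + 1) 0 (by omega)
  have e1 : fd n (m + 2) 0 = fd n (m + 1) 1 - fd n (m + 1) 0 := rfl
  have e2 : fd n (m + 1) 0 = fd n m 1 - fd n m 0 := rfl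
  simp only [dd]
  simp at a
  have e3 : fd n (m + 1 + 1) 0 = fd n (m + 2) 0 := rfl
  rw [e3] at a
  linear_combination a - (m+1)*e2 - (m+1) * e1

lemma dd_nonneg (n : ℕ) : ∀ m, m ≤ n → 0 ≤ dd n m := by
  intro m
  induction m using Nat.strong_induction_on with
  | _ m ih =>
    intro hm
    match m, ih, hm with
    | 0, _, _ => rw [dd_zero]; norm_num
    | 1, _, hm => rw [dd_one n (by omega)]
    | m + 2, ih, hm =>
      have h := dd_rec n m hm
      have h1 := ih (m + 1) (by omega) (by omega)
      have h2 := ih m (by omega) (by omega)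
      have h3 : (0 : ℝ) < (n : ℝ) - m - 1 := by
        have : ((m + 2 : ℕ) : ℝ) ≤ n := by exact_mod_cast hm
        push_cast at this; linarith
      have h4 : 0 ≤ ((n : ℝ) - m - 1) * dd n (m + 2) := by rw [h]; positivity
      exact nonneg_of_mul_nonneg_right h4 h3

/-! ### Parseval on sparse characters -/

lemma card_agree (hc : Fintype.card ι = Fintype.card G) (C : Finset ι) (π : ι ≃ G) :
    (univ.filter fun σ : ι ≃ G => ∀ l ∈ C, π l = σ l).card =
      (Fintype.card G - C.card).factorial := by
  have h1 : (univ.filter fun σ : ι ≃ G => ∀ l ∈ C, π l = σ l).card =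
      Fintype.card {τ : Equiv.Perm ι // ∀ a, ¬ (a ∉ C) → τ a = a} := by
    rw [Fintype.card_subtype]
    refine Finset.card_bij' (fun σ _ => σ.trans π.symm) (fun τ _ => τ.trans π) ?_ ?_ ?_ ?_
    · intro σ hσ
      simp only [mem_filter, mem_univ, true_and] at hσ ⊢
      intro a ha
      have := hσ a (by simpa using ha)
      simp [← this]
    · intro τ hτ
      simp only [mem_filter, mem_univ, true_and] at hτ ⊢
      intro a ha
      simp [hτ a (by simpa using ha)]
    · intro σ _; ext; simp
    · intro τ _; ext; simp
  rw [h1, ← Fintype.card_congr (Equiv.Perm.subtypeEquivSubtypePerm (fun a => a ∉ C)),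
    Fintype.card_perm]
  congr 1
  rw [Fintype.card_subtype_compl, hc]
  simp

/-- The words that are nontrivial on `A`, arbitrary on `C \ A`, and trivial elsewhere. -/
def box (A C : Finset ι) : Finset (ι → AddChar G ℂ) :=
  Fintype.piFinset fun l => if l ∈ A then univ.erase 0 else if l ∈ C then univ else {0}

lemma normSq_fc (χ : ι → AddChar G ℂ) :
    ((‖fc χ‖ ^ 2 : ℝ) : ℂ) =
      (∑ π : ι ≃ G, ∑ σ : ι ≃ G, ∏ l, χ l (π l - σ l)) /
        ((Fintype.card G).factorial : ℂ) ^ 2 := by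
  rw [← Complex.normSq_eq_norm_sq, Complex.normSq_eq_conj_mul_self, mul_comm]
  simp only [fc, map_div₀, map_sum, map_prod, Complex.conj_natCast]
  rw [div_mul_div_comm, Finset.sum_mul_sum, ← sq]
  congr 1
  refine Finset.sum_congr rfl fun π _ => Finset.sum_congr rfl fun σ _ => ?_
  rw [← Finset.prod_mul_distrib]
  refine Finset.prod_congr rfl fun l _ => ?_
  rw [sub_eq_add_neg, AddChar.map_add_eq_mul, AddChar.map_neg_eq_conj]

/-- By orthogonality the left side counts the pairs of bijections agreeing on `C`. -/
lemma parseval_base (hc : Fintype.card ι = Fintype.card G) (C : Finset ι) :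
    ∑ χ ∈ box (G := G) ∅ C, ‖fc χ‖ ^ 2 = fd (Fintype.card G) 0 C.card := by
  apply Complex.ofReal_injective
  rw [Complex.ofReal_sum]
  simp only [normSq_fc]
  rw [← Finset.sum_div]
  have h1 : ∑ χ ∈ box (G := G) ∅ C, ∑ π : ι ≃ G, ∑ σ : ι ≃ G, ∏ l, χ l (π l - σ l) =
      ∑ π : ι ≃ G, ∑ σ : ι ≃ G,
        if ∀ l ∈ C, π l = σ l then (Fintype.card G : ℂ) ^ C.card else 0 := by
    rw [Finset.sum_comm]
    refine Finset.sum_congr rfl fun π _ => ?_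
    rw [Finset.sum_comm]
    refine Finset.sum_congr rfl fun σ _ => ?_
    rw [box, ← Finset.prod_univ_sum (fun l => if l ∈ (∅ : Finset ι) then univ.erase 0 else
      if l ∈ C then univ else {0}) (fun l (ψ : AddChar G ℂ) => ψ (π l - σ l))]
    have h2 : ∀ l, ∑ ψ ∈ (if l ∈ (∅ : Finset ι) then univ.erase 0 else
        if l ∈ C then univ else {0}), (ψ : AddChar G ℂ) (π l - σ l) =
        if l ∈ C then (if π l = σ l then (Fintype.card G : ℂ) else 0) else 1 := by
      intro l
      by_cases hl : l ∈ C
      · simp only [hl, notMem_empty, if_false, if_true, AddChar.sum_apply_eq_ite, sub_eq_zero]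
      · simp [hl]
    simp only [h2]
    rw [Finset.prod_ite_mem, Finset.univ_inter]
    split_ifs with h
    · rw [Finset.prod_congr rfl (g := fun _ => (Fintype.card G : ℂ))]
      · simp
      · intro l hl; simp [h l hl]
    · push Not at h
      obtain ⟨l, hl, hne⟩ := h
      exact Finset.prod_eq_zero hl (by simp [hne])
  rw [h1]
  have h3 : ∀ π : ι ≃ G, (∑ σ : ι ≃ G,
        if ∀ l ∈ C, π l = σ l then (Fintype.card G : ℂ) ^ C.card else 0) =
        ((Fintype.card G - C.card).factorial : ℂ) * (Fintype.card G : ℂ) ^ C.card := by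
    intro π
    rw [← Finset.sum_filter, Finset.sum_const, nsmul_eq_mul, card_agree hc]
  simp only [h3]
  obtain ⟨e⟩ : Nonempty (ι ≃ G) := Fintype.card_eq.1 hc
  rw [Finset.sum_const, nsmul_eq_mul, card_univ, Fintype.card_equiv e, hc]
  have hf : ((Fintype.card G).factorial : ℂ) ≠ 0 := by
    exact_mod_cast Nat.factorial_ne_zero _
  simp only [fd]
  push_cast
  field_simp

lemma mem_box {A C : Finset ι} {χ : ι → AddChar G ℂ} : χ ∈ box A C ↔
    ∀ l, (l ∈ A → χ l ≠ 0) ∧ (l ∉ A → l ∉ C → χ l = 0) := by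
  simp only [box, Fintype.mem_piFinset]
  refine forall_congr' fun l => ?_
  by_cases h1 : l ∈ A
  · simp [h1]
  · by_cases h2 : l ∈ C <;> simp [h1, h2]

/-- Making one more slot nontrivial amounts to subtracting the words trivial there, that is, to
taking one more forward difference. -/
lemma parseval_box (hc : Fintype.card ι = Fintype.card G) (A : Finset ι) :
    ∀ C : Finset ι, Disjoint A C →
    ∑ χ ∈ box (G := G) A C, ‖fc χ‖ ^ 2 = fd (Fintype.card G) A.card C.card := by
  induction A using Finset.induction_on with
  | empty => intro C _; rw [parseval_base hc, card_empty]
  | insert i A hi ih =>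
    intro C hd
    rw [Finset.disjoint_insert_left] at hd
    have e : box (G := G) (insert i A) C = box A (insert i C) \ box A C := by
      ext χ
      simp only [mem_sdiff, mem_box, mem_insert]
      constructor
      · intro h
        refine ⟨fun l => ⟨fun hl => (h l).1 (Or.inr hl), fun h1 h2 => (h l).2 ?_ ?_⟩, ?_⟩
        · tauto
        · tauto
        · intro h'
          exact (h i).1 (Or.inl rfl) ((h' i).2 hi hd.1)
      · rintro ⟨h1, h2⟩ l
        refine ⟨?_, ?_⟩
        · rintro (rfl | hl)
          · intro h0
            apply h2
            intro k
            refine ⟨(h1 k).1, fun ha hk => ?_⟩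
            by_cases hkl : k = l
            · rw [hkl, h0]
            · exact (h1 k).2 ha (by tauto)
          · exact (h1 l).1 hl
        · intro ha hk
          exact (h1 l).2 (by tauto) (by tauto)
    have hsub : box (G := G) A C ⊆ box A (insert i C) := by
      intro χ
      simp only [mem_box, mem_insert]
      intro h l
      exact ⟨(h l).1, fun h1 h2 => (h l).2 h1 (by tauto)⟩
    have h3 := Finset.sum_sdiff hsub (f := fun χ => ‖fc χ‖ ^ 2)
    rw [e]
    rw [ih C hd.2, ih (insert i C) (by
      rw [Finset.disjoint_insert_right]; exact ⟨hi, hd.2⟩)] at h3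
    rw [card_insert_of_notMem hd.1] at h3
    rw [card_insert_of_notMem hi]
    simp only [fd]
    linarith

lemma parseval (hc : Fintype.card ι = Fintype.card G) (A : Finset ι) :
    ∑ χ : ι → AddChar G ℂ with supp χ = A, ‖fc χ‖ ^ 2 = dd (Fintype.card G) A.card := by
  have h := parseval_box (G := G) hc A ∅ (by simp)
  rw [card_empty] at h
  rw [dd, ← h]
  refine Finset.sum_congr ?_ fun _ _ => rfl
  ext χ
  simp only [mem_filter, mem_univ, true_and, mem_box, Finset.ext_iff, mem_supp, notMem_empty,
    not_false_eq_true, forall_true_left]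
  refine forall_congr' fun l => ?_
  tauto

/-! ### Uniform bounds -/

lemma supp_merge_of_ne {χ : ι → AddChar G ℂ} {i j : ι} (hj : j ∈ (supp χ).erase i)
    (h : χ i + χ j ≠ 0) : supp (merge χ i j) = (supp χ).erase i := by
  rw [mem_erase] at hj
  ext l
  rw [mem_supp, mem_erase, mem_supp]
  by_cases hl : l = i
  · subst hl; simp [merge_left χ hj.1.symm]
  by_cases hlj : l = j
  · subst hlj; rw [merge_right]; simp [h, hj.1, mem_supp.1 hj.2]
  · rw [merge_of_ne _ hl hlj]; simp [hl]

lemma supp_merge_of_eq {χ : ι → AddChar G ℂ} {i j : ι} (hj : j ∈ (supp χ).erase i)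
    (h : χ i + χ j = 0) : supp (merge χ i j) = ((supp χ).erase i).erase j := by
  rw [mem_erase] at hj
  ext l
  rw [mem_supp, mem_erase, mem_erase, mem_supp]
  by_cases hl : l = i
  · subst hl; simp [merge_left χ hj.1.symm]
  by_cases hlj : l = j
  · subst hlj; rw [merge_right]; simp [h]
  · rw [merge_of_ne _ hl hlj]; simp [hl, hlj]

lemma supp_card_le (χ : ι → AddChar G ℂ) (hc : Fintype.card ι = Fintype.card G) :
    (supp χ).card ≤ Fintype.card G := hc ▸ Finset.card_le_univ _

/-- The other indices `j` with `χ j = -χ i`: merging `i` into `j` removes both from the support. -/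
def partners (χ : ι → AddChar G ℂ) (i : ι) : Finset ι :=
  ((supp χ).erase i).filter fun j => χ i + χ j = 0

lemma norm_fc_merge_le (χ : ι → AddChar G ℂ) (hc : Fintype.card ι = Fintype.card G) {i : ι}
    (hi : i ∈ supp χ) :
    ((Fintype.card G : ℝ) - (supp χ).card + 1) * ‖fc χ‖ ≤
      ∑ j ∈ (supp χ).erase i, ‖fc (merge χ i j)‖ := by
  have h := congrArg norm (fc_merge χ hc hi)
  rw [norm_mul, norm_neg] at h
  have h1 : ‖((Fintype.card G : ℂ) - (supp χ).card + 1)‖ =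
      (Fintype.card G : ℝ) - (supp χ).card + 1 := by
    have h2 : ((Fintype.card G : ℂ) - (supp χ).card + 1) =
      (((Fintype.card G : ℝ) - (supp χ).card + 1 : ℝ) : ℂ) := by push_cast; ring
    rw [h2, Complex.norm_real, Real.norm_of_nonneg]
    have : ((supp χ).card : ℝ) ≤ Fintype.card G := by exact_mod_cast supp_card_le χ hc
    linarith
  rw [h1] at h
  rw [h]
  exact norm_sum_le _ _

/-- The merge recursion fed with bounds for the merged words: those coming from a partner of `i`
have support of size `m`, the others of size `m + 1`. -/
lemma norm_fc_rec (χ : ι → AddChar G ℂ) (hc : Fintype.card ι = Fintype.card G) {i : ι}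
    (hi : i ∈ supp χ) (m : ℕ) (hm : (supp χ).card = m + 2) (B : ℝ)
    (h1 : ∀ j ∈ (supp χ).erase i, χ i + χ j ≠ 0 →
      ‖fc (merge χ i j)‖ ≤ B * dd (Fintype.card G) (m + 1))
    (h2 : ∀ j ∈ (supp χ).erase i, χ i + χ j = 0 →
      ‖fc (merge χ i j)‖ ≤ B * dd (Fintype.card G) m) :
    ((Fintype.card G : ℝ) - m - 1) * ‖fc χ‖ ≤
      B * ((m + 1 - (partners χ i).card) * dd (Fintype.card G) (m + 1) +
        (partners χ i).card * dd (Fintype.card G) m) := by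
  have h := norm_fc_merge_le χ hc hi
  rw [hm] at h
  have e : ∑ j ∈ (supp χ).erase i, ‖fc (merge χ i j)‖ ≤
      ∑ j ∈ (supp χ).erase i, if χ i + χ j = 0 then B * dd (Fintype.card G) m else
        B * dd (Fintype.card G) (m + 1) := by
    refine Finset.sum_le_sum fun j hj => ?_
    split_ifs with h0
    · exact h2 j hj h0
    · exact h1 j hj h0
  rw [Finset.sum_ite, Finset.sum_const, Finset.sum_const, nsmul_eq_mul, nsmul_eq_mul] at e
  have hcard := Finset.card_filter_add_card_filter_not (s := (supp χ).erase i)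
    (fun j => χ i + χ j = 0)
  rw [card_erase_of_mem hi, hm] at hcard
  have hcard' : (((((supp χ).erase i).filter fun j => χ i + χ j = 0).card : ℝ) +
    (((supp χ).erase i).filter fun j => ¬ (χ i + χ j = 0)).card) = m + 1 := by
    have : (((supp χ).erase i).filter fun j => χ i + χ j = 0).card +
    (((supp χ).erase i).filter fun j => ¬ (χ i + χ j = 0)).card = m + 1 := by omega
    exact_mod_cast this
  have e2 : ((((supp χ).erase i).filter fun j => ¬ (χ i + χ j = 0)).card : ℝ) =
    m + 1 - (partners χ i).card := by rw [partners]; linarith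
  rw [e2] at e
  rw [partners] at *
  push_cast at h
  nlinarith [h, e]

lemma supp_eq_empty {χ : ι → AddChar G ℂ} : supp χ = ∅ ↔ χ = 0 := by
  simp only [supp, filter_eq_empty_iff, mem_univ, forall_true_left, not_not]
  exact ⟨fun h => funext h, fun h => by simp [h]⟩

lemma fc_eq_zero_of_card_one (χ : ι → AddChar G ℂ) (hc : Fintype.card ι = Fintype.card G)
    (h : (supp χ).card = 1) : fc χ = 0 := by
  obtain ⟨i, hi⟩ := Finset.card_eq_one.1 h
  have := fc_merge χ hc (i := i) (by simp [hi])
  rw [hi] at this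
  simp only [card_singleton, Nat.cast_one, sub_add_cancel, erase_singleton, sum_empty, neg_zero,
    mul_eq_zero, Nat.cast_eq_zero, Fintype.card_ne_zero, false_or] at this
  exact this

lemma norm_fc_le_dd (hc : Fintype.card ι = Fintype.card G) : ∀ (m : ℕ) (χ : ι → AddChar G ℂ),
    (supp χ).card = m → ‖fc χ‖ ≤ dd (Fintype.card G) m := by
  intro m
  induction m using Nat.strong_induction_on with
  | _ m ih =>
    intro χ hχ
    match m, ih, hχ with
    | 0, _, hχ =>
      rw [card_eq_zero, supp_eq_empty] at hχ
      rw [hχ, fc_zero hc, dd_zero]; simp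
    | 1, _, hχ =>
      rw [fc_eq_zero_of_card_one χ hc hχ, dd_one _ Fintype.card_pos]; simp
    | m + 2, ih, hχ =>
      obtain ⟨i, hi⟩ := Finset.card_pos.1 (show 0 < (supp χ).card by omega)
      have hle := supp_card_le χ hc
      rw [hχ] at hle
      have h := norm_fc_rec χ hc hi m hχ 1
        (fun j hj h0 => by
          rw [one_mul]
          exact ih (m + 1) (by omega) _ (by
            rw [supp_merge_of_ne hj h0, card_erase_of_mem hi, hχ]; rfl))
        (fun j hj h0 => by
          rw [one_mul]
          exact ih m (by omega) _ (by
            rw [supp_merge_of_eq hj h0, card_erase_of_mem hj, card_erase_of_mem hi, hχ]; rfl))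
      have hr := dd_rec _ m hle
      have hp : ((partners χ i).card : ℝ) ≤ m + 1 := by
        have : (partners χ i).card ≤ ((supp χ).erase i).card := card_le_card (filter_subset _ _)
        rw [card_erase_of_mem hi, hχ] at this
        exact_mod_cast this
      have h1 := dd_nonneg (Fintype.card G) (m + 1) (by omega)
      have h2 := dd_nonneg (Fintype.card G) m (by omega)
      have h3 : (0 : ℝ) < (Fintype.card G : ℝ) - m - 1 := by
        have : ((m + 2 : ℕ) : ℝ) ≤ Fintype.card G := by exact_mod_cast hle
        push_cast at this; linarith
      refine le_of_mul_le_mul_left (h.trans ?_) h3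
      rw [hr]
      have h4 : (0 : ℝ) ≤ (partners χ i).card := Nat.cast_nonneg _
      nlinarith [mul_le_mul_of_nonneg_right hp h2, mul_nonneg h4 h1]

/-- Unless `χ` is constant on its support, some index has at most half of the support as partners. -/
lemma exists_few_partners (χ : ι → AddChar G ℂ) (b : ℕ) (hb : 0 < b)
    (h : ∀ ψ, b ≤ ((supp χ).filter fun l => χ l ≠ ψ).card) :
    ∃ i ∈ supp χ, 2 * (partners χ i).card ≤ (supp χ).card := by
  by_contra! hcon
  have hne : (supp χ).Nonempty := by
    have := (h 0).trans (card_le_card (filter_subset _ _))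
    exact card_pos.1 (by omega)
  -- two disjoint sets of partners cannot both exceed half of the support
  have key : ∀ i ∈ supp χ, ∀ k ∈ supp χ, χ i = χ k := by
    intro i hi k hk
    by_contra hik
    have h1 := hcon i hi
    have h2 := hcon k hk
    have hd : Disjoint (partners χ i) (partners χ k) := by
      rw [Finset.disjoint_left]
      intro j hj hj'
      simp only [partners, mem_filter] at hj hj'
      exact hik (add_right_cancel (hj.2.trans hj'.2.symm))
    have h3 := card_union_of_disjoint hd
    have h4 : (partners χ i ∪ partners χ k).card ≤ (supp χ).card := by
      refine card_le_card (union_subset ?_ ?_) <;>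
      exact (filter_subset _ _).trans (erase_subset _ _)
    omega
  obtain ⟨i, hi⟩ := hne
  have := h (χ i)
  rw [Finset.filter_false_of_mem] at this
  · simp at this; omega
  · intro l hl; simp [key l hl i hi]

/-- An exponential gain over `norm_fc_le_dd` when every character is missed by at least `b` indices
of the support. Merging at an index with at most `(m + 2) / 2` partners gains the factor
`(m + 2) / (2 (m + 1)) ≤ (5 / 6) ^ 2` over `dd_rec`, while `b` drops by at most `2`. -/
lemma norm_fc_le_spread (hc : Fintype.card ι = Fintype.card G) : ∀ (m : ℕ) (χ : ι → AddChar G ℂ),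
    (supp χ).card = m → ∀ b : ℕ, (∀ ψ, b ≤ ((supp χ).filter fun l => χ l ≠ ψ).card) →
    ‖fc χ‖ ≤ (5 / 6 : ℝ) ^ (b - 3) * dd (Fintype.card G) m := by
  intro m
  induction m using Nat.strong_induction_on with
  | _ m ih =>
    intro χ hχ b hb
    rcases Nat.lt_or_ge b 4 with hb4 | hb4
    · rw [Nat.sub_eq_zero_of_le (by omega), pow_zero, one_mul]
      exact norm_fc_le_dd hc m χ hχ
    have hm4 : 4 ≤ m := by
      have := (hb 0).trans (card_le_card (filter_subset _ _))
      omega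
    obtain ⟨m, rfl⟩ : ∃ k, m = k + 2 := ⟨m - 2, by omega⟩
    obtain ⟨i, hi, hp⟩ := exists_few_partners χ b (by omega) hb
    have hle := supp_card_le χ hc
    rw [hχ] at hle hp
    have hb' : ∀ j ∈ (supp χ).erase i, ∀ ψ, b - 2 ≤
        ((supp (merge χ i j)).filter fun l => merge χ i j l ≠ ψ).card := by
      intro j hj ψ
      have hsub : (((supp χ).filter fun l => χ l ≠ ψ).erase i).erase j ⊆
          (supp (merge χ i j)).filter fun l => merge χ i j l ≠ ψ := by
        intro l hl
        simp only [mem_erase, mem_filter, mem_supp] at hl ⊢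
        rw [merge_of_ne _ hl.2.1 hl.1]
        exact hl.2.2
      have h1 := card_le_card hsub
      have h2 := pred_card_le_card_erase (a := i) (s := (supp χ).filter fun l => χ l ≠ ψ)
      have h3 := pred_card_le_card_erase (a := j)
        (s := ((supp χ).filter fun l => χ l ≠ ψ).erase i)
      have := hb ψ
      omega
    have h := norm_fc_rec χ hc hi m hχ ((5 / 6 : ℝ) ^ (b - 2 - 3))
        (fun j hj h0 => ih (m + 1) (by omega) _ (by
            rw [supp_merge_of_ne hj h0, card_erase_of_mem hi, hχ]; rfl) _ (hb' j hj))
        (fun j hj h0 => ih m (by omega) _ (by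
            rw [supp_merge_of_eq hj h0, card_erase_of_mem hj, card_erase_of_mem hi, hχ]; rfl)
            _ (hb' j hj))
    have hr := dd_rec _ m hle
    have hp : 2 * ((partners χ i).card : ℝ) ≤ m + 2 := by exact_mod_cast hp
    have hm4 : (2 : ℝ) ≤ m := by
      have : 2 ≤ m := by omega
      exact_mod_cast this
    have h1 := dd_nonneg (Fintype.card G) (m + 1) (by omega)
    have h2 := dd_nonneg (Fintype.card G) m (by omega)
    have h3 : (0 : ℝ) < (Fintype.card G : ℝ) - m - 1 := by
      have : ((m + 2 : ℕ) : ℝ) ≤ Fintype.card G := by exact_mod_cast hle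
      push_cast at this; linarith
    refine le_of_mul_le_mul_left (h.trans ?_) h3
    have h4 : (0 : ℝ) ≤ (partners χ i).card := Nat.cast_nonneg _
    set t : ℝ := ((partners χ i).card : ℝ)
    set d1 := dd (Fintype.card G) (m + 1)
    set d0 := dd (Fintype.card G) m
    have h5 : (m + 1 - t) * d1 + t * d0 ≤ (25 / 36 : ℝ) * ((m + 1) * (2 * d1 + d0)) := by
      have a1 : (m + 1 - t) * d1 ≤ (m + 1) * d1 := by nlinarith [mul_nonneg h4 h1]
      have a2 : t * d0 ≤ (25 / 36 * (m + 1)) * d0 :=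
        mul_le_mul_of_nonneg_right (by linarith) h2
      nlinarith [mul_nonneg (by linarith : (0:ℝ) ≤ m + 1) h1]
    have h6 : (5 / 6 : ℝ) ^ (b - 2 - 3) * (25 / 36) ≤ (5 / 6 : ℝ) ^ (b - 3) := by
      have : (25 / 36 : ℝ) = (5 / 6) ^ 2 := by norm_num
      rw [this, ← pow_add]
      exact pow_le_pow_of_le_one (by norm_num) (by norm_num) (by omega)
    have h7 : 0 ≤ (m + 1) * (2 * d1 + d0) := by positivity
    calc (5 / 6 : ℝ) ^ (b - 2 - 3) * ((m + 1 - t) * d1 + t * d0)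
        ≤ (5 / 6 : ℝ) ^ (b - 2 - 3) * ((25 / 36 : ℝ) * ((m + 1) * (2 * d1 + d0))) := by gcongr
      _ = ((5 / 6 : ℝ) ^ (b - 2 - 3) * (25 / 36)) * ((m + 1) * (2 * d1 + d0)) := by ring
      _ ≤ (5 / 6 : ℝ) ^ (b - 3) * ((m + 1) * (2 * d1 + d0)) := by gcongr
      _ = _ := by rw [← hr]; ring

/-! ### Levels of size at most a multiple of `√n` -/

lemma dd_le (n : ℕ) (hn : 0 < n) : ∀ m : ℕ, 10 ^ 6 * m ≤ n →
    dd n m ≤ (1.005 : ℝ) ^ m * √((m.factorial : ℝ) / n ^ m) := by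
  intro m
  induction m using Nat.strong_induction_on with
  | _ m ih =>
    intro hm
    match m, ih, hm with
    | 0, _, _ => rw [dd_zero]; simp
    | 1, _, _ => rw [dd_one n hn]; positivity
    | m + 2, ih, hm =>
      have hr := dd_rec n m (by omega)
      have i1 := ih (m + 1) (by omega) (by omega)
      have i0 := ih m (by omega) (by omega)
      have hn' : (0 : ℝ) < n := by exact_mod_cast hn
      have hm' : (10 : ℝ) ^ 6 * (m + 2) ≤ n := by exact_mod_cast hm
      set r := √((m.factorial : ℝ) / n ^ m) with hrdef
      have hr0 : 0 ≤ r := Real.sqrt_nonneg _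
      have e1 : √(((m + 1).factorial : ℝ) / n ^ (m + 1)) ≤ 0.001 * r := by
        have : ((m + 1).factorial : ℝ) / n ^ (m + 1) =
            ((m + 1) / n) * ((m.factorial : ℝ) / n ^ m) := by
          rw [Nat.factorial_succ]; push_cast; field_simp; ring
        rw [this, Real.sqrt_mul (by positivity)]
        refine mul_le_mul_of_nonneg_right ?_ hr0
        rw [Real.sqrt_le_left (by norm_num), div_le_iff₀ hn']
        norm_num at hm' ⊢; linarith
      have e2 : (m + 1) / n * r ≤ √(((m + 2).factorial : ℝ) / n ^ (m + 2)) := by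
        have : ((m + 2).factorial : ℝ) / n ^ (m + 2) =
            ((m + 1) * (m + 2) / n ^ 2) * ((m.factorial : ℝ) / n ^ m) := by
          rw [Nat.factorial_succ, Nat.factorial_succ]; push_cast; field_simp; ring
        rw [this, Real.sqrt_mul (by positivity)]
        refine mul_le_mul_of_nonneg_right ?_ hr0
        apply Real.le_sqrt_of_sq_le
        rw [div_pow]
        gcongr
        nlinarith
      have h3 : (0 : ℝ) < (n : ℝ) - m - 1 := by norm_num at hm'; linarith
      refine le_of_mul_le_mul_left ?_ h3
      rw [hr]
      have hl : (0 : ℝ) < 1.005 ^ m := by positivity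
      have a1 : dd n (m + 1) ≤ 1.005 ^ m * (0.00101 * r) := by
        refine i1.trans ?_
        rw [pow_succ, mul_assoc]
        refine mul_le_mul_of_nonneg_left ?_ hl.le
        nlinarith
      have a2 : 2 * dd n (m + 1) + dd n m ≤ 1.005 ^ m * (1.003 * r) := by
        nlinarith [mul_nonneg hl.le hr0]
      calc ((m : ℝ) + 1) * (2 * dd n (m + 1) + dd n m) ≤ (m + 1) * (1.005 ^ m * (1.003 * r)) := by
            gcongr
        _ ≤ (n - m - 1) * (1.005 ^ (m + 2) * ((m + 1) / n * r)) := by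
            have : ((n : ℝ) - m - 1) * (1.005 ^ (m + 2) * ((m + 1) / n * r)) =
              (m + 1) * (1.005 ^ m * ((((n : ℝ) - m - 1) / n * 1.005 ^ 2) * r)) := by
              rw [pow_add]; field_simp
            rw [this]
            have h5 : (1.003 : ℝ) ≤ ((n : ℝ) - m - 1) / n * 1.005 ^ 2 := by
              rw [div_mul_eq_mul_div, le_div_iff₀ hn']
              norm_num at hm' ⊢; linarith
            gcongr
        _ ≤ _ := by gcongr

lemma choose_mul_dd_sq_le (n : ℕ) (hn : 0 < n) (m : ℕ) (hm : 10 ^ 6 * m ≤ n) :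
    (n.choose m : ℝ) * dd n m ^ 2 ≤ (1.005 : ℝ) ^ (2 * m) := by
  have h1 := dd_le n hn m hm
  have h0 := dd_nonneg n m (by omega)
  have hn' : (0 : ℝ) < n := by exact_mod_cast hn
  have hf : (0 : ℝ) < m.factorial := by exact_mod_cast Nat.factorial_pos m
  have h2 : dd n m ^ 2 ≤ 1.005 ^ (2 * m) * ((m.factorial : ℝ) / n ^ m) := by
    calc dd n m ^ 2 ≤ ((1.005 : ℝ) ^ m * √((m.factorial : ℝ) / n ^ m)) ^ 2 := by gcongr
      _ = _ := by rw [mul_pow, Real.sq_sqrt (by positivity), ← pow_mul, mul_comm m]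
  calc (n.choose m : ℝ) * dd n m ^ 2 ≤
      ((n : ℝ) ^ m / m.factorial) * (1.005 ^ (2 * m) * ((m.factorial : ℝ) / n ^ m)) := by
        gcongr
        exact Nat.choose_le_pow_div m n
    _ = _ := by field_simp

lemma sum_cube_supp_le (hc : Fintype.card ι = Fintype.card G) (A : Finset ι) :
    ∑ χ : ι → AddChar G ℂ with supp χ = A, ‖fc χ‖ ^ 3 ≤ dd (Fintype.card G) A.card ^ 2 := by
  calc ∑ χ : ι → AddChar G ℂ with supp χ = A, ‖fc χ‖ ^ 3
      ≤ ∑ χ : ι → AddChar G ℂ with supp χ = A, dd (Fintype.card G) A.card * ‖fc χ‖ ^ 2 := by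
        refine Finset.sum_le_sum fun χ hχ => ?_
        rw [mem_filter] at hχ
        have := norm_fc_le_dd hc A.card χ (by rw [hχ.2])
        rw [pow_succ' _ 2]
        gcongr
    _ = _ := by rw [← Finset.mul_sum, parseval hc A, sq]

/-- Counts the words with support `A` that agree with a constant off at most `q` places. -/
lemma card_concentrated_le (A : Finset ι) (q : ℕ) :
    ((univ.filter fun χ : ι → AddChar G ℂ => supp χ = A ∧
      ∃ ψ, ((supp χ).filter fun l => χ l ≠ ψ).card ≤ q).card : ℝ) ≤
      Fintype.card G * 2 ^ A.card * (Fintype.card G : ℝ) ^ q := by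
  have hsub : (univ.filter fun χ : ι → AddChar G ℂ => supp χ = A ∧
      ∃ ψ, ((supp χ).filter fun l => χ l ≠ ψ).card ≤ q) ⊆
      (univ ×ˢ (A.powerset.filter fun B => B.card ≤ q)).biUnion
        fun p : AddChar G ℂ × Finset ι => Fintype.piFinset
          fun l => if l ∈ p.2 then univ else if l ∈ A then {p.1} else {0} := by
    intro χ hχ
    simp only [mem_filter, mem_univ, true_and] at hχ
    obtain ⟨hA, ψ, hq⟩ := hχ
    rw [hA] at hq
    simp only [mem_biUnion, mem_product, mem_univ, true_and, mem_filter, mem_powerset, Prod.exists,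
      Fintype.mem_piFinset]
    refine ⟨ψ, A.filter fun l => χ l ≠ ψ, ⟨filter_subset _ _, hq⟩, fun l => ?_⟩
    by_cases h1 : l ∈ A
    · by_cases h2 : χ l = ψ
      · simp [h1, h2]
      · simp [h1, h2]
    · have : χ l = 0 := by
        rw [← hA, mem_supp] at h1; simpa using h1
      simp [h1, this]
  have h1 := (card_le_card hsub).trans card_biUnion_le
  have h2 : ∑ p ∈ (univ : Finset (AddChar G ℂ)) ×ˢ (A.powerset.filter fun B => B.card ≤ q),
      (Fintype.piFinset fun l => if l ∈ p.2 then (univ : Finset (AddChar G ℂ)) else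
        if l ∈ A then {p.1} else {0}).card ≤
      ∑ p ∈ (univ : Finset (AddChar G ℂ)) ×ˢ (A.powerset.filter fun B => B.card ≤ q),
        Fintype.card G ^ q := by
    refine Finset.sum_le_sum fun p hp => ?_
    simp only [mem_product, mem_filter, mem_powerset, mem_univ, true_and] at hp
    rw [Fintype.card_piFinset]
    have : ∀ l, (if l ∈ p.2 then (univ : Finset (AddChar G ℂ)) else
        if l ∈ A then {p.1} else {0}).card = if l ∈ p.2 then Fintype.card G else 1 := by
      intro l
      split_ifs <;> simp
    simp only [this]
    rw [Finset.prod_ite_mem, univ_inter, prod_const]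
    exact Nat.pow_le_pow_right Fintype.card_pos hp.2
  rw [sum_const, card_product, smul_eq_mul, card_univ, AddChar.card_eq] at h2
  have h3 : (A.powerset.filter fun B => B.card ≤ q).card ≤ 2 ^ A.card := by
    rw [← card_powerset]; exact card_filter_le _ _
  have h4 := (h1.trans h2).trans
    (Nat.mul_le_mul_right (Fintype.card G ^ q) (Nat.mul_le_mul_left (Fintype.card G) h3))
  exact_mod_cast h4

/-- Refines `sum_cube_supp_le`. Words on `A` that differ from every constant in at least
`b = ⌈|A| / 8⌉` places are treated by `norm_fc_le_spread`; the remaining ones are few, so that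
counting them and using the uniform bound suffices. -/
lemma sum_cube_supp_le' (hc : Fintype.card ι = Fintype.card G) (A : Finset ι) :
    ∑ χ : ι → AddChar G ℂ with supp χ = A, ‖fc χ‖ ^ 3 ≤
      (5 / 6 : ℝ) ^ ((A.card + 7) / 8 - 3) * dd (Fintype.card G) A.card ^ 2 +
      Fintype.card G * 2 ^ A.card * (Fintype.card G : ℝ) ^ (A.card / 8) *
        dd (Fintype.card G) A.card ^ 3 := by
  set b := (A.card + 7) / 8 with hb
  have hA : A.card ≤ Fintype.card G := hc ▸ Finset.card_le_univ _
  have hd0 := dd_nonneg _ _ hA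
  have hsplit := Finset.sum_filter_add_sum_filter_not
    (univ.filter fun χ : ι → AddChar G ℂ => supp χ = A)
    (fun χ => ∀ ψ, b ≤ ((supp χ).filter fun l => χ l ≠ ψ).card) (fun χ => ‖fc χ‖ ^ 3)
  rw [← hsplit]
  apply add_le_add
  · calc _ ≤ ∑ χ ∈ univ.filter fun χ : ι → AddChar G ℂ => supp χ = A,
          ((5 / 6 : ℝ) ^ (b - 3) * dd (Fintype.card G) A.card) * ‖fc χ‖ ^ 2 := by
          refine (Finset.sum_le_sum (g := fun χ => ((5 / 6 : ℝ) ^ (b - 3) *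
            dd (Fintype.card G) A.card) * ‖fc χ‖ ^ 2) fun χ hχ => ?_).trans
            (Finset.sum_le_sum_of_subset_of_nonneg (filter_subset _ _) fun χ _ _ => by positivity)
          simp only [mem_filter, mem_univ, true_and] at hχ
          have := norm_fc_le_spread hc A.card χ (by rw [hχ.1]) b hχ.2
          rw [pow_succ' _ 2]
          gcongr
      _ = _ := by rw [← Finset.mul_sum, parseval hc A, sq]; ring
  · rw [filter_filter]
    calc _ ≤ ∑ χ ∈ univ.filter fun χ : ι → AddChar G ℂ => supp χ = A ∧
            ∃ ψ, ((supp χ).filter fun l => χ l ≠ ψ).card ≤ A.card / 8,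
          dd (Fintype.card G) A.card ^ 3 := by
          have hsub : (univ.filter fun χ : ι → AddChar G ℂ => supp χ = A ∧
              ¬ ∀ ψ, b ≤ ((supp χ).filter fun l => χ l ≠ ψ).card) ⊆
              univ.filter fun χ : ι → AddChar G ℂ => supp χ = A ∧
              ∃ ψ, ((supp χ).filter fun l => χ l ≠ ψ).card ≤ A.card / 8 := by
            intro χ hχ
            simp only [mem_filter, mem_univ, true_and, not_forall, not_le] at hχ ⊢
            obtain ⟨h1, ψ, h2⟩ := hχ
            exact ⟨h1, ψ, by omega⟩
          refine (Finset.sum_le_sum (g := fun χ => dd (Fintype.card G) A.card ^ 3)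
            fun χ hχ => ?_).trans
            (Finset.sum_le_sum_of_subset_of_nonneg hsub fun χ _ _ => by positivity)
          simp only [mem_filter, mem_univ, true_and] at hχ
          have := norm_fc_le_dd hc A.card χ (by rw [hχ.1])
          gcongr
      _ ≤ _ := by
          rw [sum_const, nsmul_eq_mul]
          exact mul_le_mul_of_nonneg_right (card_concentrated_le A _) (by positivity)

lemma sum_level (g : (ι → AddChar G ℂ) → ℝ) (m : ℕ) :
    ∑ χ : ι → AddChar G ℂ with (supp χ).card = m, g χ =
      ∑ A ∈ powersetCard m univ, ∑ χ : ι → AddChar G ℂ with supp χ = A, g χ := by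
  rw [← Finset.sum_fiberwise_of_maps_to (t := powersetCard m univ) (g := supp)]
  · refine Finset.sum_congr rfl fun A hA => Finset.sum_congr ?_ fun _ _ => rfl
    rw [mem_powersetCard] at hA
    ext χ
    simp only [mem_filter, mem_univ, true_and, and_iff_right_iff_imp]
    intro h; rw [h, hA.2]
  · intro χ hχ
    simpa [mem_powersetCard] using hχ

/-- Bound for the `ℓ³`-mass of the words with support of size `m`: a geometrically decaying term,
plus the contribution of the nearly constant words. -/
lemma level_le (hc : Fintype.card ι = Fintype.card G) (m : ℕ)
    (hm : 10 ^ 6 * m ≤ Fintype.card G) :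
    ∑ χ : ι → AddChar G ℂ with (supp χ).card = m, ‖fc χ‖ ^ 3 ≤
      2 * (0.99 : ℝ) ^ m +
      Fintype.card G * 2 ^ m * (Fintype.card G : ℝ) ^ (m / 8) * (1.005 : ℝ) ^ (2 * m) *
        dd (Fintype.card G) m := by
  have hn : 0 < Fintype.card G := Fintype.card_pos
  rw [sum_level]
  have hd0 := dd_nonneg (Fintype.card G) m (by omega)
  have h1 : ∀ A ∈ powersetCard m (univ : Finset ι),
      ∑ χ : ι → AddChar G ℂ with supp χ = A, ‖fc χ‖ ^ 3 ≤
      (5 / 6 : ℝ) ^ ((m + 7) / 8 - 3) * dd (Fintype.card G) m ^ 2 +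
      Fintype.card G * 2 ^ m * (Fintype.card G : ℝ) ^ (m / 8) *
        dd (Fintype.card G) m ^ 3 := by
    intro A hA
    rw [mem_powersetCard] at hA
    have := sum_cube_supp_le' (G := G) hc A
    rwa [hA.2] at this
  refine (Finset.sum_le_sum h1).trans ?_
  rw [sum_const, card_powersetCard, card_univ, hc, nsmul_eq_mul]
  have h2 := choose_mul_dd_sq_le _ hn m hm
  have h3 : (5 / 6 : ℝ) ^ ((m + 7) / 8 - 3) * 1.005 ^ (2 * m) ≤ 2 * (0.99 : ℝ) ^ m := by
    set b := (m + 7) / 8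
    have hb : m ≤ 8 * b := by omega
    have e1 : (5 / 6 : ℝ) ^ (b - 3) ≤ 1.728 * (5 / 6) ^ b := by
      have : (1.728 : ℝ) * (5 / 6) ^ b = (6 / 5) ^ 3 * (5 / 6) ^ b := by norm_num
      rw [this]
      rcases le_total 3 b with h | h
      · obtain ⟨c, hc⟩ := Nat.exists_eq_add_of_le h
        rw [hc, Nat.add_sub_cancel_left, pow_add, ← mul_assoc]
        norm_num
      · rw [Nat.sub_eq_zero_of_le h, pow_zero]
        have : (5 / 6 : ℝ) ^ 3 ≤ (5 / 6) ^ b :=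
          pow_le_pow_of_le_one (by norm_num) (by norm_num) h
        nlinarith
    have e2 : (1.005 : ℝ) ^ (2 * m) ≤ (1.005 ^ 16) ^ b := by
      rw [← pow_mul]; exact pow_le_pow_right₀ (by norm_num) (by omega)
    calc (5 / 6 : ℝ) ^ (b - 3) * 1.005 ^ (2 * m) ≤ (1.728 * (5 / 6) ^ b) * (1.005 ^ 16) ^ b := by
          gcongr
      _ = 1.728 * ((5 / 6) * 1.005 ^ 16) ^ b := by rw [mul_pow]; ring
      _ ≤ 2 * (0.99 ^ 8) ^ b := by
          gcongr
          · norm_num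
          · norm_num
      _ = 2 * 0.99 ^ (8 * b) := by rw [pow_mul]
      _ ≤ 2 * 0.99 ^ m := by
          have := pow_le_pow_of_le_one (a := (0.99 : ℝ)) (by norm_num) (by norm_num) hb
          linarith
  have hp1 : (0 : ℝ) ≤ (5 / 6) ^ ((m + 7) / 8 - 3) := by positivity
  have hp2 : (0 : ℝ) ≤ Fintype.card G * 2 ^ m * (Fintype.card G : ℝ) ^ (m / 8) *
        dd (Fintype.card G) m := by positivity
  calc _ = (5 / 6 : ℝ) ^ ((m + 7) / 8 - 3) *
        ((Fintype.card G).choose m * dd (Fintype.card G) m ^ 2) +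
      (Fintype.card G * 2 ^ m * (Fintype.card G : ℝ) ^ (m / 8) *
        dd (Fintype.card G) m) * ((Fintype.card G).choose m * dd (Fintype.card G) m ^ 2) := by ring
    _ ≤ (5 / 6 : ℝ) ^ ((m + 7) / 8 - 3) * 1.005 ^ (2 * m) +
      (Fintype.card G * 2 ^ m * (Fintype.card G : ℝ) ^ (m / 8) *
        dd (Fintype.card G) m) * 1.005 ^ (2 * m) := by gcongr
    _ ≤ _ := by
      have : (Fintype.card G * 2 ^ m * (Fintype.card G : ℝ) ^ (m / 8) *
        dd (Fintype.card G) m) * (1.005 : ℝ) ^ (2 * m) = Fintype.card G * 2 ^ m *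
        (Fintype.card G : ℝ) ^ (m / 8) * (1.005 : ℝ) ^ (2 * m) * dd (Fintype.card G) m := by ring
      rw [this]
      linarith

/-- The second term of `level_le` is negligible for `48 ≤ m ≤ K √n`, since `dd n m` is roughly
`(m / n) ^ (m / 2)`. -/
lemma small_level_le (K : ℝ) (hK : 1 ≤ K) : ∃ N : ℕ, ∀ n : ℕ, N ≤ n → ∀ m : ℕ, 48 ≤ m →
    (m : ℝ) ≤ K * √n → 10 ^ 6 * m ≤ n ∧
      (n : ℝ) * 2 ^ m * (n : ℝ) ^ (m / 8) * (1.005 : ℝ) ^ (2 * m) * dd n m ≤ 1 / (n : ℝ) ^ 2 := by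
  set C : ℝ := 4 * K with hC
  obtain ⟨N, hN⟩ := exists_nat_ge (max ((10 ^ 6 * K) ^ 2) (C ^ 16))
  refine ⟨N + 1, fun n hn m hm hmK => ?_⟩
  have hn1 : 1 ≤ n := by omega
  have hnR : (1 : ℝ) ≤ n := by exact_mod_cast hn1
  have hn0 : (0 : ℝ) < n := by linarith
  have hNn : (N : ℝ) ≤ n := by exact_mod_cast (by omega : N ≤ n)
  have hb1 : (10 ^ 6 * K) ^ 2 ≤ n := ((le_max_left _ _).trans hN).trans hNn
  have hb2 : C ^ 16 ≤ n := ((le_max_right _ _).trans hN).trans hNn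
  have hs : 10 ^ 6 * K ≤ √n := Real.le_sqrt_of_sq_le hb1
  have hsq : √(n : ℝ) * √n = n := Real.mul_self_sqrt hn0.le
  have hs0 : 0 < √(n : ℝ) := Real.sqrt_pos.2 hn0
  have hm6 : 10 ^ 6 * m ≤ n := by
    have : (10 : ℝ) ^ 6 * m ≤ n := by
      calc (10 : ℝ) ^ 6 * m ≤ 10 ^ 6 * (K * √n) := by gcongr
        _ = (10 ^ 6 * K) * √n := by ring
        _ ≤ √n * √n := by gcongr
        _ = n := hsq
    exact_mod_cast this
  refine ⟨hm6, ?_⟩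
  -- with `u = n ^ (1 / 16)`, every factor is a power of `u`
  set u : ℝ := (n : ℝ) ^ ((1 : ℝ) / 16) with hu
  have hu0 : 0 < u := Real.rpow_pos_of_pos hn0 _
  have hu1 : 1 ≤ u := Real.one_le_rpow hnR (by norm_num)
  have hu16 : u ^ 16 = n := by
    rw [hu, ← Real.rpow_natCast, ← Real.rpow_mul hn0.le]; norm_num
  have hsu : √(n : ℝ) = u ^ 8 := by
    rw [← hu16, show u ^ 16 = (u ^ 8) ^ 2 by ring, Real.sqrt_sq (by positivity)]
  have hCu : C ≤ u := by
    refine le_of_pow_le_pow_left₀ (n := 16) (by norm_num) hu0.le ?_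
    rw [hu16]; exact hb2
  have hd : dd n m ≤ 1.005 ^ m * (K ^ m / u ^ (4 * m)) := by
    refine (dd_le n (by omega) m hm6).trans ?_
    gcongr
    apply Real.sqrt_le_iff.2
    refine ⟨by positivity, ?_⟩
    have hmf : (m.factorial : ℝ) ≤ (m : ℝ) ^ m := by exact_mod_cast Nat.factorial_le_pow m
    have hmu : (m : ℝ) ≤ K * u ^ 8 := by rw [← hsu]; exact hmK
    calc (m.factorial : ℝ) / n ^ m ≤ (K * u ^ 8) ^ m / (u ^ 16) ^ m := by
          rw [hu16]; gcongr; exact hmf.trans (by gcongr)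
      _ = K ^ m / u ^ (8 * m) := by
          rw [mul_pow, ← pow_mul, ← pow_mul, show 16 * m = 8 * m + 8 * m by ring, pow_add]
          field_simp
      _ ≤ (K ^ m) ^ 2 / (u ^ (8 * m)) := by
          gcongr
          exact le_self_pow₀ (one_le_pow₀ hK) (by norm_num)
      _ = _ := by rw [div_pow, ← pow_mul u, show 4 * m * 2 = 8 * m by ring]
  have hn8 : (n : ℝ) ^ (m / 8) ≤ u ^ (2 * m) := by
    rw [← hu16, ← pow_mul]
    exact pow_le_pow_right₀ hu1 (by omega)
  have hd0 := dd_nonneg n m (by omega)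
  calc (n : ℝ) * 2 ^ m * (n : ℝ) ^ (m / 8) * (1.005 : ℝ) ^ (2 * m) * dd n m
      ≤ (n : ℝ) * 2 ^ m * u ^ (2 * m) * (1.005 : ℝ) ^ (2 * m) *
        (1.005 ^ m * (K ^ m / u ^ (4 * m))) := by gcongr
    _ = n * ((2 * 1.005 ^ 3 * K) ^ m / u ^ (2 * m)) := by
        rw [show 4 * m = 2 * m + 2 * m by ring, pow_add u, mul_pow, mul_pow, ← pow_mul, 
          show 3 * m = 2 * m + m by ring, pow_add (1.005 : ℝ) (2 * m) m]
        field_simp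
    _ ≤ n * (u ^ m / u ^ (2 * m)) := by
        gcongr
        refine le_trans ?_ hCu
        rw [hC]; gcongr; norm_num
    _ = n * (1 / u ^ m) := by
        rw [two_mul, pow_add]; field_simp
    _ ≤ n * (1 / u ^ 48) := by
        gcongr
    _ = 1 / (n : ℝ) ^ 2 := by
        rw [← hu16]; field_simp

/-! ### Bounding a coefficient by the type of the word -/

/-- The type of a word `w : α → D`: how often each letter occurs. -/
def cnt {α D : Type} [Fintype α] [DecidableEq D] (w : α → D) (d : D) : ℕ :=
  (univ.filter fun i => w i = d).card

lemma prod_cnt {α D R : Type} [Fintype α] [Fintype D] [DecidableEq D] [CommMonoid R]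
    (w : α → D) (r : D → R) : ∏ i, r (w i) = ∏ d, r d ^ cnt w d := by
  rw [← Finset.prod_fiberwise_of_maps_to (s := univ) (t := univ) (g := w) (fun _ _ => mem_univ _)]
  refine Finset.prod_congr rfl fun d _ => ?_
  rw [Finset.prod_congr rfl (g := fun _ => r d) (fun i hi => by rw [(mem_filter.1 hi).2])]
  rw [Finset.prod_const, cnt]

lemma sum_cnt {α D : Type} [Fintype α] [Fintype D] [DecidableEq D] (w : α → D) :
    ∑ d, cnt w d = Fintype.card α := by
  have := Finset.card_eq_sum_card_fiberwise (s := (univ : Finset α)) (t := univ) (f := w)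
    (fun _ _ => mem_univ _)
  simpa [cnt] using this.symm

lemma cnt_le {α D : Type} [Fintype α] [DecidableEq D] (w : α → D) (d : D) :
    cnt w d ≤ Fintype.card α := card_le_univ _

/-- The number of bijections transporting the word `u` to the word `w`. -/
lemma card_equiv_word {α β D : Type} [Fintype α] [DecidableEq α] [Fintype β] [DecidableEq β]
    [Fintype D] [DecidableEq D] (u : α → D) (w : β → D) :
    (univ.filter fun π : α ≃ β => ∀ i, w (π i) = u i).card =
      if cnt w = cnt u then ∏ d, (cnt u d).factorial else 0 := by
  split_ifs with h
  · have e' : ∀ d, Nonempty ({a // u a = d} ≃ {b // w b = d}) := fun d => by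
      refine ⟨Fintype.equivOfCardEq ?_⟩
      rw [Fintype.card_subtype, Fintype.card_subtype]
      exact (congrFun h d).symm
    have e := fun d => (e' d).some
    set π₀ : α ≃ β := Equiv.ofFiberEquiv (fun d => (e d)) with hπ₀
    have h0 : ∀ a, w (π₀ a) = u a := fun a => Equiv.ofFiberEquiv_map _ _
    have h1 := DomMulAct.stabilizer_card u
    have h2 : Fintype.card {g : Equiv.Perm α // u ∘ ⇑g = u} =
        (univ.filter fun π : α ≃ β => ∀ i, w (π i) = u i).card := by
      rw [← Fintype.card_subtype]
      refine Fintype.card_congr (Equiv.subtypeEquiv (Equiv.equivCongr (Equiv.refl α) π₀) ?_)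
      intro g
      simp only [Equiv.equivCongr_apply_apply, Equiv.refl_symm, Equiv.refl_apply, h0]
      exact funext_iff
    rw [← h2, h1]
    refine Finset.prod_congr rfl fun d _ => ?_
    rw [Fintype.card_subtype, cnt]
  · rw [card_eq_zero, filter_eq_empty_iff]
    intro π _ hπ
    refine h (funext fun d => ?_)
    unfold cnt
    refine (Finset.card_bij (fun a _ => π a) ?_ ?_ ?_).symm
    · intro a ha; simpa [hπ] using ha
    · intro a _ b _ hab; exact π.injective hab
    · intro b hb
      refine ⟨π.symm b, ?_, by simp⟩
      simp only [mem_filter, mem_univ, true_and] at hb ⊢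
      rw [← hπ]; simpa using hb

/-- The sum over bijections depends only on the type of `χ`: it is a multiple of the sum over all
rearrangements of `χ` along `G`. -/
lemma sum_equiv_eq (χ : ι → AddChar G ℂ) :
    ∑ π : ι ≃ G, ∏ i, χ i (π i) = (∏ ψ, ((cnt χ ψ).factorial : ℂ)) *
      ∑ w : G → AddChar G ℂ with cnt w = cnt χ, ∏ x, w x x := by
  have h1 : ∀ π : ι ≃ G, ∏ i, χ i (π i) =
      ∑ w : G → AddChar G ℂ, if (∀ i, w (π i) = χ i) then ∏ x, w x x else 0 := by
    intro π
    rw [Finset.sum_eq_single (fun x => χ (π.symm x))]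
    · simp only [Equiv.symm_apply_apply, implies_true, if_true]
      rw [← Equiv.prod_comp π]
      simp
    · intro w _ hw
      rw [if_neg]
      intro h
      exact hw (funext fun x => by rw [← h]; simp)
    · simp
  simp_rw [h1]
  rw [Finset.sum_comm, Finset.sum_filter, Finset.mul_sum]
  refine Finset.sum_congr rfl fun w _ => ?_
  rw [← Finset.sum_filter, Finset.sum_const, card_equiv_word]
  split_ifs <;> simp

/-- Parseval on `G`, for a combination of characters. -/
lemma sum_norm_sq_char (c : AddChar G ℂ → ℂ) :
    ∑ x : G, ‖∑ ψ : AddChar G ℂ, c ψ * ψ x‖ ^ 2 = Fintype.card G * ∑ ψ, ‖c ψ‖ ^ 2 := by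
  have hC : (∑ x : G, ((‖∑ ψ : AddChar G ℂ, c ψ * ψ x‖ ^ 2 : ℝ) : ℂ)) =
      Fintype.card G * ∑ ψ, ((‖c ψ‖ ^ 2 : ℝ) : ℂ) := by
    have h1 : ∀ z : ℂ, ((‖z‖ ^ 2 : ℝ) : ℂ) = z * (starRingEnd ℂ) z := fun z => by
      rw [Complex.mul_conj, Complex.normSq_eq_norm_sq]
    simp_rw [h1, map_sum, map_mul, Finset.sum_mul_sum]
    have h2 : ∀ x : G, ∀ ψ φ : AddChar G ℂ, c ψ * ψ x * ((starRingEnd ℂ) (c φ) *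
        (starRingEnd ℂ) (φ x)) = c ψ * (starRingEnd ℂ) (c φ) * (ψ - φ) x := by
      intro x ψ φ
      rw [AddChar.sub_apply', ← AddChar.map_neg_eq_conj, AddChar.map_neg_eq_inv, div_eq_mul_inv]
      ring
    simp_rw [h2]
    rw [Finset.sum_comm, Finset.mul_sum]
    refine Finset.sum_congr rfl fun ψ _ => ?_
    rw [Finset.sum_comm]
    simp_rw [← Finset.mul_sum, AddChar.sum_eq_ite, sub_eq_zero]
    simp only [mul_ite, mul_zero, Finset.sum_ite_eq, mem_univ, if_true]
    ring
  exact_mod_cast hC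

/-- AM–GM in the normalised form used below. -/
lemma prod_norm_le_one {α : Type} [Fintype α] (y : α → ℂ)
    (h : ∑ x, ‖y x‖ ^ 2 = Fintype.card α) : ∏ x, ‖y x‖ ≤ 1 := by
  have h1 : (∏ x, ‖y x‖) ^ 2 ≤ 1 := by
    rw [← Finset.prod_pow]
    calc ∏ x, ‖y x‖ ^ 2 ≤ ∏ x, Real.exp (‖y x‖ ^ 2 - 1) := by
          refine Finset.prod_le_prod (fun _ _ => by positivity) fun x _ => ?_
          have := Real.add_one_le_exp (‖y x‖ ^ 2 - 1)
          linarith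
      _ = 1 := by
          rw [← Real.exp_sum, Finset.sum_sub_distrib, h]; simp
  have h2 : 0 ≤ ∏ x, ‖y x‖ := Finset.prod_nonneg fun _ _ => norm_nonneg _
  nlinarith

/-- Orthogonality of phases, which extracts one multidegree from a polynomial whose degree in each
variable is at most `N`. -/
lemma sum_phase {D : Type} [Fintype D] [DecidableEq D] (N : ℕ) (a b : D → ℕ)
    (ha : ∀ d, a d ≤ N) (hb : ∀ d, b d ≤ N) :
    ∑ θ : D → ZMod (N + 1), ∏ d, (ZMod.stdAddChar (θ d) ^ b d *
      ZMod.stdAddChar (-(θ d)) ^ a d : ℂ) = if b = a then ((N + 1 : ℕ) : ℂ) ^ Fintype.card D else 0 := by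
  have key : ∀ d, ∑ t : ZMod (N + 1), (ZMod.stdAddChar t ^ b d *
      ZMod.stdAddChar (-t) ^ a d : ℂ) = if b d = a d then ((N + 1 : ℕ) : ℂ) else 0 := by
    intro d
    have h1 : ∀ t : ZMod (N + 1), (ZMod.stdAddChar t ^ b d * ZMod.stdAddChar (-t) ^ a d : ℂ) =
        ZMod.stdAddChar (t * ((b d : ZMod (N + 1)) - (a d : ZMod (N + 1)))) := by
      intro t
      rw [← AddChar.map_nsmul_eq_pow, ← AddChar.map_nsmul_eq_pow, ← AddChar.map_add_eq_mul]
      congr 1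
      simp only [nsmul_eq_mul]; ring
    simp_rw [h1]
    rw [AddChar.sum_mulShift _ (ZMod.isPrimitive_stdAddChar (N + 1))]
    have h2 : ((b d : ZMod (N + 1)) - (a d : ZMod (N + 1)) = 0) ↔ b d = a d := by
      rw [sub_eq_zero, ZMod.natCast_eq_natCast_iff']
      rw [Nat.mod_eq_of_lt (Nat.lt_succ_of_le (hb d)), Nat.mod_eq_of_lt (Nat.lt_succ_of_le (ha d))]
    simp only [h2, ZMod.card]
    split_ifs <;> simp
  have h3 := Finset.prod_univ_sum (fun _ : D => (univ : Finset (ZMod (N + 1))))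
    (fun d t => (ZMod.stdAddChar t ^ b d * ZMod.stdAddChar (-t) ^ a d : ℂ))
  rw [Fintype.piFinset_univ] at h3
  rw [← h3]
  simp_rw [key]
  split_ifs with h
  · subst h; simp
  · obtain ⟨d, hd⟩ := Function.ne_iff.1 h
    exact Finset.prod_eq_zero (mem_univ d) (by simp [hd])

/-- The sum over words of type `a` is the coefficient of `∏ ψ, (t ψ) ^ a ψ` in the polynomial
`∏ x, ∑ ψ, t ψ * ψ x`. On the torus `|t ψ| = ρ ψ` this polynomial is at most `1` in modulus, by
Parseval on `G` and AM–GM. -/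
lemma norm_sum_word_le (a : AddChar G ℂ → ℕ) (ha : ∀ ψ, a ψ ≤ Fintype.card G)
    (ρ : AddChar G ℂ → ℝ) (hρ0 : ∀ ψ, 0 ≤ ρ ψ) (hρ : ∑ ψ, ρ ψ ^ 2 = 1) :
    ‖∑ w : G → AddChar G ℂ with cnt w = a, ∏ x, w x x‖ * ∏ ψ, ρ ψ ^ a ψ ≤ 1 := by
  set N := Fintype.card G with hN
  set M : ℂ := ((N + 1 : ℕ) : ℂ) ^ Fintype.card (AddChar G ℂ) with hM
  -- averaging over phases isolates the words of type `a`
  have h1 : ∑ θ : AddChar G ℂ → ZMod (N + 1), (∏ ψ, (ZMod.stdAddChar (-(θ ψ)) ^ a ψ : ℂ)) *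
      ∏ x : G, ∑ ψ : AddChar G ℂ, ((ρ ψ : ℂ) * ZMod.stdAddChar (θ ψ)) * ψ x =
      M * ((∑ w : G → AddChar G ℂ with cnt w = a, ∏ x, w x x) * ∏ ψ, (ρ ψ : ℂ) ^ a ψ) := by
    have h2 : ∀ θ : AddChar G ℂ → ZMod (N + 1),
        (∏ ψ, (ZMod.stdAddChar (-(θ ψ)) ^ a ψ : ℂ)) *
        ∏ x : G, ∑ ψ : AddChar G ℂ, ((ρ ψ : ℂ) * ZMod.stdAddChar (θ ψ)) * ψ x =
        ∑ w : G → AddChar G ℂ, ((∏ x, w x x) * ∏ ψ, (ρ ψ : ℂ) ^ cnt w ψ) *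
          ∏ ψ, (ZMod.stdAddChar (θ ψ) ^ cnt w ψ * ZMod.stdAddChar (-(θ ψ)) ^ a ψ : ℂ) := by
      intro θ
      rw [Finset.prod_univ_sum, Fintype.piFinset_univ, Finset.mul_sum]
      refine Finset.sum_congr rfl fun w _ => ?_
      rw [Finset.prod_mul_distrib, Finset.prod_mul_distrib, Finset.prod_mul_distrib,
        prod_cnt w (fun ψ => (ρ ψ : ℂ)),
        prod_cnt w (fun ψ => (ZMod.stdAddChar (θ ψ) : ℂ))]
      ring
    simp_rw [h2]
    rw [Finset.sum_comm]
    simp_rw [← Finset.mul_sum]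
    rw [Finset.sum_congr rfl (fun w _ => by rw [sum_phase N a (cnt w) ha (fun d => cnt_le w d)]),
      Finset.sum_filter, Finset.sum_mul, Finset.mul_sum]
    refine Finset.sum_congr rfl fun w _ => ?_
    split_ifs with h
    · rw [h, hM]; ring
    · simp
  have h3 : ‖M * ((∑ w : G → AddChar G ℂ with cnt w = a, ∏ x, w x x) * ∏ ψ, (ρ ψ : ℂ) ^ a ψ)‖ ≤
      ‖M‖ := by
    rw [← h1]
    refine (norm_sum_le _ _).trans ?_
    have h4 : ∀ θ : AddChar G ℂ → ZMod (N + 1), ‖(∏ ψ, (ZMod.stdAddChar (-(θ ψ)) ^ a ψ : ℂ)) *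
        ∏ x : G, ∑ ψ : AddChar G ℂ, ((ρ ψ : ℂ) * ZMod.stdAddChar (θ ψ)) * ψ x‖ ≤ 1 := by
      intro θ
      rw [norm_mul, norm_prod, norm_prod]
      have h5 : ∏ ψ, ‖(ZMod.stdAddChar (-(θ ψ)) ^ a ψ : ℂ)‖ = 1 :=
        Finset.prod_eq_one fun ψ _ => by rw [norm_pow, AddChar.norm_apply, one_pow]
      rw [h5, one_mul]
      refine prod_norm_le_one _ ?_
      rw [sum_norm_sq_char (fun ψ => (ρ ψ : ℂ) * ZMod.stdAddChar (θ ψ))]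
      simp_rw [norm_mul, AddChar.norm_apply, mul_one, Complex.norm_real, Real.norm_eq_abs, sq_abs]
      rw [hρ, mul_one]
    refine (Finset.sum_le_sum fun θ _ => h4 θ).trans ?_
    rw [Finset.sum_const, card_univ, Fintype.card_fun, ZMod.card, hM, norm_pow, Complex.norm_natCast]
    simp
  have hM0 : 0 < ‖M‖ := by
    rw [norm_pos_iff, hM]
    exact pow_ne_zero _ (by exact_mod_cast Nat.succ_ne_zero N)
  rw [norm_mul, mul_le_iff_le_one_right hM0, norm_mul, norm_prod] at h3
  refine le_of_eq_of_le ?_ h3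
  congr 1
  refine Finset.prod_congr rfl fun ψ _ => ?_
  rw [norm_pow, Complex.norm_real, Real.norm_of_nonneg (hρ0 ψ)]

/-! ### Summing the type bound -/

/-- `a!³ / a ^ (5 a / 2)`, the factor contributed by a letter of multiplicity `a` to the bound
`sum_cube_type`. At `a = 0` it is `1`. -/
def hh (a : ℕ) : ℝ := (a.factorial : ℝ) ^ 3 / √(a : ℝ) ^ (5 * a)

lemma hh_nonneg (a : ℕ) : 0 ≤ hh a := by unfold hh; positivity

lemma hh_zero : hh 0 = 1 := by simp [hh]

lemma card_pos_real : (0 : ℝ) < Fintype.card G := by exact_mod_cast Fintype.card_pos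

lemma sqrt_self_pow_pos (a : ℕ) : 0 < √(a : ℝ) ^ a := by
  rcases Nat.eq_zero_or_pos a with rfl | h
  · simp
  · have : (0 : ℝ) < a := by exact_mod_cast h
    positivity

/-- The case `ρ ψ = √(cnt χ ψ / n)` of `norm_sum_word_le`. -/
lemma norm_fc_type (hc : Fintype.card ι = Fintype.card G) (χ : ι → AddChar G ℂ) :
    ‖fc χ‖ ≤ (∏ ψ, ((cnt χ ψ).factorial : ℝ)) * √(Fintype.card G : ℝ) ^ Fintype.card G /
      ((Fintype.card G).factorial * ∏ ψ, √(cnt χ ψ : ℝ) ^ cnt χ ψ) := by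
  set n := Fintype.card G with hn
  have hn0 : (0 : ℝ) < n := card_pos_real
  have hsum : ∑ ψ, (cnt χ ψ : ℝ) = n := by
    rw [← hc, ← sum_cnt χ]; push_cast; rfl
  have h1 := norm_sum_word_le (cnt χ) (fun ψ => (cnt_le χ ψ).trans_eq hc)
    (fun ψ => √(cnt χ ψ : ℝ) / √(n : ℝ)) (fun ψ => by positivity) (by
      simp_rw [div_pow, Real.sq_sqrt (Nat.cast_nonneg _)]
      rw [← Finset.sum_div, hsum, div_self hn0.ne'])
  simp_rw [div_pow] at h1
  rw [Finset.prod_div_distrib, Finset.prod_pow_eq_pow_sum, sum_cnt, hc] at h1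
  have hQ : 0 < ∏ ψ, √(cnt χ ψ : ℝ) ^ cnt χ ψ := Finset.prod_pos fun ψ _ => sqrt_self_pow_pos _
  have hs : 0 < √(n : ℝ) ^ n := by positivity
  have hf : (0 : ℝ) < n.factorial := by positivity
  have h2 : ‖fc χ‖ = (∏ ψ, ((cnt χ ψ).factorial : ℝ)) *
      ‖∑ w : G → AddChar G ℂ with cnt w = cnt χ, ∏ x, w x x‖ / n.factorial := by
    rw [fc, sum_equiv_eq, norm_div, norm_mul, norm_prod]
    simp [hn]
  rw [h2, div_le_div_iff₀ hf (by positivity)]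
  rw [← mul_div_assoc, div_le_one hs] at h1
  have hP : 0 ≤ (∏ ψ, ((cnt χ ψ).factorial : ℝ)) := by positivity
  calc _ = (∏ ψ, ((cnt χ ψ).factorial : ℝ)) * n.factorial *
        (‖∑ w : G → AddChar G ℂ with cnt w = cnt χ, ∏ x, w x x‖ *
          ∏ ψ, √(cnt χ ψ : ℝ) ^ cnt χ ψ) := by ring
    _ ≤ (∏ ψ, ((cnt χ ψ).factorial : ℝ)) * n.factorial * √(n : ℝ) ^ n := by gcongr
    _ = _ := by ring

/-- The entropy bound `∏ ψ, (n / a ψ) ^ a ψ` for the number of words of type `a`. -/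
lemma card_type_le (hc : Fintype.card ι = Fintype.card G) (a : AddChar G ℂ → ℕ)
    (ha : ∑ ψ, a ψ = Fintype.card G) :
    ((univ.filter fun χ : ι → AddChar G ℂ => cnt χ = a).card : ℝ) ≤
      (√(Fintype.card G : ℝ) ^ Fintype.card G) ^ 2 / (∏ ψ, √(a ψ : ℝ) ^ a ψ) ^ 2 := by
  set n := Fintype.card G with hn
  have hn0 : (0 : ℝ) < n := card_pos_real
  have hQ : 0 < ∏ ψ, √(a ψ : ℝ) ^ a ψ := Finset.prod_pos fun ψ _ => sqrt_self_pow_pos _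
  have h1 := Finset.prod_univ_sum (fun _ : ι => (univ : Finset (AddChar G ℂ)))
    (fun _ ψ => (a ψ : ℝ))
  rw [Fintype.piFinset_univ] at h1
  rw [le_div_iff₀ (by positivity)]
  have h2 : (√(n : ℝ) ^ n) ^ 2 = ∏ i : ι, ∑ ψ, (a ψ : ℝ) := by
    rw [← pow_mul, mul_comm, pow_mul, Real.sq_sqrt hn0.le, Finset.prod_const, card_univ, hc,
      ← Nat.cast_sum, ha]
  have h3 : (∏ ψ, √(a ψ : ℝ) ^ a ψ) ^ 2 = ∏ ψ, (a ψ : ℝ) ^ a ψ := by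
    rw [← Finset.prod_pow]
    refine Finset.prod_congr rfl fun ψ _ => ?_
    rw [← pow_mul, mul_comm, pow_mul, Real.sq_sqrt (Nat.cast_nonneg _)]
  rw [h2, h1, h3, ← nsmul_eq_mul, ← Finset.sum_const]
  refine le_trans (Finset.sum_le_sum fun χ hχ => ?_)
    (Finset.sum_le_sum_of_subset_of_nonneg (filter_subset (fun χ => cnt χ = a) _)
      fun χ _ _ => by positivity)
  rw [prod_cnt χ (fun ψ => (a ψ : ℝ)), (mem_filter.1 hχ).2]

lemma sum_cube_type (hc : Fintype.card ι = Fintype.card G) (a : AddChar G ℂ → ℕ)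
    (ha : ∑ ψ, a ψ = Fintype.card G) :
    ∑ χ : ι → AddChar G ℂ with cnt χ = a, ‖fc χ‖ ^ 3 ≤
      √(Fintype.card G : ℝ) ^ (5 * Fintype.card G) / ((Fintype.card G).factorial : ℝ) ^ 3 *
        ∏ ψ, hh (a ψ) := by
  set n := Fintype.card G with hn
  set Q := ∏ ψ, √(a ψ : ℝ) ^ a ψ with hQd
  have hQ : 0 < Q := Finset.prod_pos fun ψ _ => sqrt_self_pow_pos _
  set F := ∏ ψ, ((a ψ).factorial : ℝ) with hF
  have hF0 : 0 < F := by positivity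
  have hh1 : ∏ ψ, hh (a ψ) = F ^ 3 / Q ^ 5 := by
    rw [hF, hQd, ← Finset.prod_pow, ← Finset.prod_pow, ← Finset.prod_div_distrib]
    refine Finset.prod_congr rfl fun ψ _ => ?_
    rw [hh, ← pow_mul, mul_comm 5]
  calc ∑ χ : ι → AddChar G ℂ with cnt χ = a, ‖fc χ‖ ^ 3
      ≤ ∑ χ : ι → AddChar G ℂ with cnt χ = a, (F * √(n : ℝ) ^ n / (n.factorial * Q)) ^ 3 := by
        refine Finset.sum_le_sum fun χ hχ => ?_
        have := norm_fc_type hc χ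
        rw [(mem_filter.1 hχ).2] at this
        gcongr
    _ ≤ (√(n : ℝ) ^ n) ^ 2 / Q ^ 2 * (F * √(n : ℝ) ^ n / (n.factorial * Q)) ^ 3 := by
        rw [Finset.sum_const, nsmul_eq_mul]
        have := card_type_le (ι := ι) hc a ha
        gcongr
    _ = _ := by
        rw [hh1, mul_comm 5 n, pow_mul]
        field_simp

/-- Sum of `‖fc χ‖³` over all `χ` whose type is restricted letter by letter. The parameter `z` is
free since the type always has total mass `n`. -/
lemma sum_cube_types (hc : Fintype.card ι = Fintype.card G) (S : AddChar G ℂ → Finset ℕ)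
    (z : ℝ) (hz : 0 < z) :
    ∑ χ : ι → AddChar G ℂ with (∀ ψ, cnt χ ψ ∈ S ψ), ‖fc χ‖ ^ 3 ≤
      √(Fintype.card G : ℝ) ^ (5 * Fintype.card G) / ((Fintype.card G).factorial : ℝ) ^ 3 *
        (z ^ Fintype.card G)⁻¹ * ∏ ψ, ∑ a ∈ S ψ, hh a * z ^ a := by
  set n := Fintype.card G with hn
  rw [← Finset.sum_fiberwise_of_maps_to (s := univ.filter fun χ : ι → AddChar G ℂ =>
    ∀ ψ, cnt χ ψ ∈ S ψ) (t := Fintype.piFinset S) (g := fun χ => cnt χ)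
    (fun χ hχ => Fintype.mem_piFinset.2 (mem_filter.1 hχ).2), Finset.prod_univ_sum, Finset.mul_sum]
  refine Finset.sum_le_sum fun a haS => ?_
  have hnn : ∀ ψ, 0 ≤ hh (a ψ) * z ^ a ψ := fun ψ => mul_nonneg (hh_nonneg _) (by positivity)
  by_cases ha : ∑ ψ, a ψ = n
  · calc _ ≤ ∑ χ : ι → AddChar G ℂ with cnt χ = a, ‖fc χ‖ ^ 3 := by
          refine Finset.sum_le_sum_of_subset_of_nonneg ?_ fun _ _ _ => by positivity
          intro χ hχ
          simp only [mem_filter, mem_univ, true_and] at hχ ⊢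
          exact hχ.2
      _ ≤ _ := sum_cube_type hc a ha
      _ = _ := by
          rw [Finset.prod_mul_distrib, Finset.prod_pow_eq_pow_sum, ha, ← hn]
          field_simp
  · rw [Finset.sum_eq_zero]
    · have := Finset.prod_nonneg (s := univ) fun ψ _ => hnn ψ
      positivity
    · intro χ hχ
      exact absurd (by rw [← (mem_filter.1 hχ).2, sum_cnt, hc]) ha

/-! ### The one-letter generating function -/

lemma factorial_le_exp (a : ℕ) (ha : 1 ≤ a) :
    (a.factorial : ℝ) ≤ Real.exp 1 * a * (a / Real.exp 1) ^ a := by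
  induction a, ha using Nat.le_induction with
  | base => simp
  | succ a ha ih =>
    have ha0 : (0 : ℝ) < a := by exact_mod_cast ha
    have he := Real.exp_pos 1
    -- `e ≤ (1 + 1/a)^(a+1)`
    have h1 : Real.exp 1 * (a : ℝ) ^ (a + 1) ≤ ((a : ℝ) + 1) ^ (a + 1) := by
      have h2 : (a : ℝ) / (a + 1) ≤ Real.exp (-(1 / (a + 1 : ℝ))) := by
        have := Real.add_one_le_exp (-(1 / (a + 1 : ℝ)))
        refine le_trans (le_of_eq ?_) this
        field_simp; ring
      have h3 : ((a : ℝ) / (a + 1)) ^ (a + 1) ≤ Real.exp (-1) := by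
        calc _ ≤ (Real.exp (-(1 / (a + 1 : ℝ)))) ^ (a + 1) := by gcongr
          _ = _ := by
            rw [← Real.exp_nat_mul]; congr 1; push_cast; field_simp
      rw [div_pow, div_le_iff₀ (by positivity), Real.exp_neg] at h3
      calc Real.exp 1 * (a : ℝ) ^ (a + 1) ≤ Real.exp 1 * ((Real.exp 1)⁻¹ * ((a : ℝ) + 1) ^ (a + 1)) := by
            gcongr
        _ = _ := by field_simp
    rw [Nat.factorial_succ]
    push_cast
    calc ((a : ℝ) + 1) * a.factorial ≤ (a + 1) * (Real.exp 1 * a * (a / Real.exp 1) ^ a) := by gcongr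
      _ = (a + 1) * (Real.exp 1 * (a : ℝ) ^ (a + 1)) / Real.exp 1 ^ a := by
          rw [div_pow, pow_succ]; field_simp
      _ ≤ (a + 1) * (((a : ℝ) + 1) ^ (a + 1)) / Real.exp 1 ^ a := by gcongr
      _ = _ := by rw [div_pow, pow_succ (Real.exp 1)]; field_simp

lemma hh_le (a : ℕ) (ha : 1 ≤ a) :
    hh a ≤ Real.exp 3 * a ^ 3 * (√(a : ℝ) / Real.exp 3) ^ a := by
  have ha0 : (0 : ℝ) < a := by exact_mod_cast ha
  have h1 := factorial_le_exp a ha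
  have he : Real.exp 3 = Real.exp 1 ^ 3 := by rw [← Real.exp_nat_mul]; norm_num
  have hs : (a : ℝ) = √(a : ℝ) ^ 2 := (Real.sq_sqrt ha0.le).symm
  have hs0 : 0 < √(a : ℝ) := Real.sqrt_pos.2 ha0
  calc hh a ≤ (Real.exp 1 * a * (a / Real.exp 1) ^ a) ^ 3 / √(a : ℝ) ^ (5 * a) := by
        unfold hh; gcongr
    _ = Real.exp 3 * a ^ 3 * ((a : ℝ) ^ a) ^ 3 / (Real.exp 1 ^ a) ^ 3 / √(a : ℝ) ^ (5 * a) := by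
        rw [he, div_pow]; field_simp
    _ = Real.exp 3 * a ^ 3 * (√(a : ℝ) ^ (6 * a)) / (Real.exp 1 ^ a) ^ 3 / √(a : ℝ) ^ (5 * a) := by
        congr 3
        nth_rw 1 [hs]
        rw [← pow_mul, ← pow_mul]; congr 1; ring
    _ = _ := by
        rw [show 6 * a = a + 5 * a by ring, pow_add, he, div_pow, ← pow_mul, ← pow_mul, mul_comm 3 a]
        field_simp

/-- The factor of one letter in `sum_cube_types` at `z = B / √n` is `1 + O(1 / √n)`. By `hh_le` the
`a`-th term is at most a polynomial in `a` times `(B √(a / n) / e³) ^ a`, and the hypothesis makes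
this geometrically small up to multiplicity `α n`. -/
lemma sum_hh_le (B α : ℝ) (hB : 0 < B) (hα : 0 < α) (h : B ^ 2 * α < Real.exp 3 ^ 2) :
    ∃ C : ℝ, 0 < C ∧ ∀ n : ℕ, 1 ≤ n → ∀ L : ℕ, (L : ℝ) ≤ α * n →
      ∑ a ∈ range (L + 1), hh a * (B / √(n : ℝ)) ^ a ≤ 1 + C / √(n : ℝ) := by
  set q := B / Real.exp 3 * √α with hq
  have he := Real.exp_pos 3
  have hq0 : 0 < q := by positivity
  have hq1 : q < 1 := by
    have : q ^ 2 < 1 := by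
      rw [hq, mul_pow, Real.sq_sqrt hα.le, div_pow, div_mul_eq_mul_div, div_lt_one (by positivity)]
      exact h
    nlinarith
  have hsum : Summable fun a : ℕ => (a : ℝ) ^ 4 * q ^ a :=
    summable_pow_mul_geometric_of_norm_lt_one 4 (by rwa [Real.norm_of_nonneg hq0.le])
  set T := ∑' a : ℕ, (a : ℝ) ^ 4 * q ^ a with hT
  have hT0 : 0 ≤ T := tsum_nonneg fun a => by positivity
  refine ⟨B / q * T + 1, by positivity, fun n hn L hL => ?_⟩
  have hn0 : (0 : ℝ) < n := by exact_mod_cast hn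
  have hsn : 0 < √(n : ℝ) := Real.sqrt_pos.2 hn0
  rw [Finset.sum_range_succ', hh_zero, pow_zero, mul_one, add_comm]
  gcongr
  have key : ∀ a ∈ range L, hh (a + 1) * (B / √(n : ℝ)) ^ (a + 1) ≤
      (B / q / √(n : ℝ)) * (((a + 1 : ℕ) : ℝ) ^ 4 * q ^ (a + 1)) := by
    intro a ha
    set b := a + 1 with hb
    have hb1 : 1 ≤ b := by omega
    have hbR : (1 : ℝ) ≤ b := by exact_mod_cast hb1
    have hbL : (b : ℝ) ≤ L := by exact_mod_cast (mem_range.1 ha)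
    set p := B / Real.exp 3 * (√(b : ℝ) / √(n : ℝ)) with hp
    have hp0 : 0 ≤ p := by positivity
    have hpq : p ≤ q := by
      rw [hp, hq, ← Real.sqrt_div (Nat.cast_nonneg _)]
      gcongr
      rw [div_le_iff₀ hn0]; linarith
    have hsb : √(b : ℝ) ≤ b := Real.sqrt_le_self_iff.2 (Or.inr hbR)
    calc hh b * (B / √(n : ℝ)) ^ b
        ≤ Real.exp 3 * b ^ 3 * (√(b : ℝ) / Real.exp 3) ^ b * (B / √(n : ℝ)) ^ b := by
          gcongr; exact hh_le b hb1
      _ = Real.exp 3 * b ^ 3 * p ^ b := by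
          rw [mul_assoc, ← mul_pow, hp]; congr 2; field_simp
      _ = Real.exp 3 * b ^ 3 * (p * p ^ a) := by rw [← pow_succ' p a]
      _ ≤ Real.exp 3 * b ^ 3 * ((B / Real.exp 3 * (b / √(n : ℝ))) * q ^ a) := by
          have : p ≤ B / Real.exp 3 * (b / √(n : ℝ)) := by rw [hp]; gcongr
          gcongr
      _ = _ := by rw [hb, pow_succ q]; field_simp
  calc _ ≤ ∑ a ∈ range L, (B / q / √(n : ℝ)) * (((a + 1 : ℕ) : ℝ) ^ 4 * q ^ (a + 1)) :=
        Finset.sum_le_sum key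
    _ = (B / q / √(n : ℝ)) * ∑ a ∈ range L, (((a + 1 : ℕ) : ℝ) ^ 4 * q ^ (a + 1)) := by
        rw [Finset.mul_sum]
    _ ≤ (B / q / √(n : ℝ)) * T := by
        gcongr
        have h5 := hsum.sum_le_tsum (range (L + 1)) (fun a _ => by positivity)
        rw [Finset.sum_range_succ'] at h5
        simpa using h5
    _ ≤ _ := by
        rw [div_mul_eq_mul_div]; gcongr; linarith

/-! ### Spread words and medium levels -/

lemma one_add_div_sqrt_pow_le (C : ℝ) (hC : 0 ≤ C) (n : ℕ) (hn : 1 ≤ n) :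
    (1 + C / √(n : ℝ)) ^ n ≤ Real.exp (C * √(n : ℝ)) := by
  have hn0 : (0 : ℝ) < n := by exact_mod_cast hn
  have hs : 0 < √(n : ℝ) := Real.sqrt_pos.2 hn0
  calc (1 + C / √(n : ℝ)) ^ n ≤ Real.exp (C / √(n : ℝ)) ^ n := by
        gcongr
        have := Real.add_one_le_exp (C / √(n : ℝ)); linarith
    _ = Real.exp (C * √(n : ℝ)) := by
        rw [← Real.exp_nat_mul]
        congr 1
        nth_rw 1 [← Real.mul_self_sqrt hn0.le]
        field_simp

/-- The words in which no letter fills more than 99.9% of the slots contribute `o(1)`. With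
`z = 1.0002 e³ / √n` the prefactor of `sum_cube_types` is at most `1.0002 ^ (-n)`, the product
over letters is `exp (O(√n)) ≤ 1.0001 ^ n`, and `1.0002² · 0.999 < 1` makes `sum_hh_le` apply. -/
lemma sum_spread_le (ε : ℝ) (hε : 0 < ε) : ∃ N : ℕ, ∀ (ι G : Type) [Fintype ι] [DecidableEq ι]
    [AddCommGroup G] [Fintype G] [DecidableEq G], Fintype.card ι = Fintype.card G →
    N ≤ Fintype.card G →
    ∑ χ : ι → AddChar G ℂ with (∀ ψ, 1000 * cnt χ ψ ≤ 999 * Fintype.card G), ‖fc χ‖ ^ 3 ≤ ε := by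
  have he := Real.exp_pos 3
  obtain ⟨C, hC, hsum⟩ := sum_hh_le (1.0002 * Real.exp 3) 0.999 (by positivity) (by norm_num) (by
    nlinarith [sq_nonneg (Real.exp 3), pow_pos he 2])
  obtain ⟨N₁, hN₁⟩ := exists_pow_lt_of_lt_one hε (show (1.0001 / 1.0002 : ℝ) < 1 by norm_num)
  obtain ⟨N₂, hN₂⟩ := exists_nat_ge ((10001 * C) ^ 2)
  refine ⟨max N₁ N₂ + 1, ?_⟩
  intro ι G _ _ _ _ _ hc hN
  set n := Fintype.card G with hn
  have hn1 : 1 ≤ n := by omega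
  have hn0 : (0 : ℝ) < n := by exact_mod_cast hn1
  have hs : 0 < √(n : ℝ) := Real.sqrt_pos.2 hn0
  have hn2 : (10001 * C) ^ 2 ≤ n := hN₂.trans (by exact_mod_cast (by omega : N₂ ≤ n))
  have hCn : C * √(n : ℝ) ≤ n * (1 / 10001) := by
    have h1 : 10001 * C ≤ √(n : ℝ) := Real.le_sqrt_of_sq_le hn2
    have h2 : √(n : ℝ) * √(n : ℝ) = n := Real.mul_self_sqrt hn0.le
    nlinarith
  set z := 1.0002 * Real.exp 3 / √(n : ℝ) with hz
  have hz0 : 0 < z := by positivity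
  have hL : (((999 * n / 1000 : ℕ)) : ℝ) ≤ 0.999 * n := by
    refine (Nat.cast_div_le).trans ?_
    push_cast; linarith
  calc ∑ χ : ι → AddChar G ℂ with (∀ ψ, 1000 * cnt χ ψ ≤ 999 * n), ‖fc χ‖ ^ 3
      = ∑ χ : ι → AddChar G ℂ with (∀ ψ, cnt χ ψ ∈ range (999 * n / 1000 + 1)), ‖fc χ‖ ^ 3 := by
        congr 1
        ext χ
        simp only [mem_filter, mem_univ, true_and, mem_range]
        refine forall_congr' fun ψ => ?_
        omega
    _ ≤ √(n : ℝ) ^ (5 * n) / (n.factorial : ℝ) ^ 3 * (z ^ n)⁻¹ *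
        ∏ ψ : AddChar G ℂ, ∑ a ∈ range (999 * n / 1000 + 1), hh a * z ^ a :=
        sum_cube_types hc (fun _ => range (999 * n / 1000 + 1)) z hz0
    _ ≤ √(n : ℝ) ^ (5 * n) / (n.factorial : ℝ) ^ 3 * (z ^ n)⁻¹ * (1 + C / √(n : ℝ)) ^ n := by
        rw [Finset.prod_const, card_univ, AddChar.card_eq, ← hn]
        gcongr
        · exact Finset.sum_nonneg fun a _ => mul_nonneg (hh_nonneg a) (by positivity)
        · exact hsum n hn1 _ hL
    _ ≤ √(n : ℝ) ^ (5 * n) / (n.factorial : ℝ) ^ 3 * (z ^ n)⁻¹ * Real.exp (1 / 10001) ^ n := by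
        refine mul_le_mul_of_nonneg_left ?_ (by positivity)
        refine (one_add_div_sqrt_pow_le C hC.le n hn1).trans ?_
        rw [← Real.exp_nat_mul]
        exact Real.exp_le_exp.2 hCn
    _ = ((n : ℝ) ^ n / n.factorial) ^ 3 * (1 / (1.0002 * Real.exp 3)) ^ n *
        Real.exp (1 / 10001) ^ n := by
        rw [hz, div_pow, inv_div, div_pow, div_pow, one_pow]
        have : ((n : ℝ) ^ n) ^ 3 = √(n : ℝ) ^ (5 * n) * √(n : ℝ) ^ n := by
          nth_rw 1 [← Real.sq_sqrt hn0.le]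
          rw [← pow_mul, ← pow_mul, ← pow_add]; congr 1; ring
        rw [this]; field_simp
    _ ≤ (Real.exp n) ^ 3 * (1 / (1.0002 * Real.exp 3)) ^ n * (1.0001 : ℝ) ^ n := by
        gcongr
        · exact Real.pow_div_factorial_le_exp n hn0.le n
        · have h1 := Real.add_one_le_exp (-(1 / 10001 : ℝ))
          rw [Real.exp_neg] at h1
          have h2 := Real.exp_pos (1 / 10001 : ℝ)
          have h3 := mul_le_mul_of_nonneg_right h1 h2.le
          rw [inv_mul_cancel₀ h2.ne'] at h3
          linarith
    _ = (1.0001 / 1.0002) ^ n := by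
        rw [← Real.exp_nat_mul, show ((3 : ℕ) : ℝ) * n = n * 3 by push_cast; ring,
          Real.exp_nat_mul, ← mul_pow, ← mul_pow]
        congr 1; field_simp
    _ ≤ (1.0001 / 1.0002) ^ N₁ :=
        pow_le_pow_of_le_one (by norm_num) (by norm_num) (by omega)
    _ ≤ ε := hN₁.le

lemma cnt_zero (χ : ι → AddChar G ℂ) : cnt χ 0 + (supp χ).card = Fintype.card ι := by
  have := Finset.card_filter_add_card_filter_not (s := (univ : Finset ι)) (fun i => χ i = 0)
  simpa [cnt, supp] using this

lemma cnt_le_supp (χ : ι → AddChar G ℂ) {ψ : AddChar G ℂ} (hψ : ψ ≠ 0) :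
    cnt χ ψ ≤ (supp χ).card := by
  refine card_le_card fun i hi => ?_
  rw [mem_supp, (mem_filter.1 hi).2]; exact hψ

lemma sqrt_ratio_le (n m : ℕ) (h : m < n) :
    √(n : ℝ) ^ (5 * n) ≤ √(n : ℝ) ^ (5 * m) * √((n - m : ℕ) : ℝ) ^ (5 * (n - m)) *
      Real.exp (5 / 2) ^ m := by
  obtain ⟨k, rfl⟩ := Nat.exists_eq_add_of_lt h
  set k' := k + 1 with hk'
  have hk0 : (0 : ℝ) < k' := by positivity
  rw [show m + k + 1 - m = k' by omega, show m + k + 1 = m + k' by omega, mul_add, pow_add,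
    mul_assoc]
  gcongr
  have h1 : √((m + k' : ℕ) : ℝ) ≤ √(k' : ℝ) * Real.exp (m / (2 * k')) := by
    apply Real.sqrt_le_iff.2
    refine ⟨by positivity, ?_⟩
    rw [mul_pow, Real.sq_sqrt hk0.le, ← Real.exp_nat_mul]
    have h2 := Real.add_one_le_exp ((m : ℝ) / k')
    have h3 : ((2 : ℕ) : ℝ) * (m / (2 * k')) = m / k' := by push_cast; field_simp
    rw [h3]
    calc ((m + k' : ℕ) : ℝ) = k' * (m / k' + 1) := by push_cast; field_simp
      _ ≤ _ := by gcongr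
  calc √((m + k' : ℕ) : ℝ) ^ (5 * k') ≤ (√(k' : ℝ) * Real.exp (m / (2 * k'))) ^ (5 * k') := by gcongr
    _ = _ := by
      rw [mul_pow, ← Real.exp_nat_mul, ← Real.exp_nat_mul]
      congr 2; push_cast; field_simp

/-- Levels between `K √n` and `n / 1000`. The trivial letter has multiplicity exactly `n - m` and
is removed from the product with little loss; the other letters, of multiplicity at most `m`, are
summed with `z = 30 / √n`. The resulting `exp (C √n)` is absorbed by `m ≥ K √n`. -/
lemma sum_medium_le : ∃ K : ℝ, 1 ≤ K ∧ ∀ (ι G : Type) [Fintype ι] [DecidableEq ι]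
    [AddCommGroup G] [Fintype G] [DecidableEq G], Fintype.card ι = Fintype.card G →
    ∀ m : ℕ, K * √(Fintype.card G : ℝ) ≤ m → 1000 * m ≤ Fintype.card G →
    ∑ χ : ι → AddChar G ℂ with (supp χ).card = m, ‖fc χ‖ ^ 3 ≤ (2 / 3 : ℝ) ^ m := by
  have he3 : (1 : ℝ) ≤ Real.exp 3 := Real.one_le_exp (by norm_num)
  obtain ⟨C, hC, hsum⟩ := sum_hh_le 30 0.001 (by norm_num) (by norm_num) (by
    nlinarith)
  refine ⟨4 * C + 1, by linarith, ?_⟩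
  intro ι G _ _ _ _ _ hc m hKm hm
  set n := Fintype.card G with hn
  have hn1 : 1 ≤ n := Fintype.card_pos
  have hn0 : (0 : ℝ) < n := by exact_mod_cast hn1
  have hs : 0 < √(n : ℝ) := Real.sqrt_pos.2 hn0
  have hmn : m < n := by omega
  have hmR : 1000 * (m : ℝ) ≤ n := by exact_mod_cast hm
  have hCm : C * √(n : ℝ) ≤ m * (1 / 4) := by nlinarith
  set z := 30 / √(n : ℝ) with hz
  have hz0 : 0 < z := by positivity
  set S : AddChar G ℂ → Finset ℕ := fun ψ => if ψ = 0 then {n - m} else range (m + 1) with hS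
  have hprod : ∏ ψ, ∑ a ∈ S ψ, hh a * z ^ a ≤
      (hh (n - m) * z ^ (n - m)) * Real.exp (1 / 4) ^ m := by
    rw [← Finset.mul_prod_erase univ _ (mem_univ (0 : AddChar G ℂ))]
    have h0 : ∑ a ∈ S 0, hh a * z ^ a = hh (n - m) * z ^ (n - m) := by simp [hS]
    rw [h0]
    have hhn := hh_nonneg (n - m)
    gcongr
    calc _ ≤ ∏ ψ ∈ univ.erase (0 : AddChar G ℂ), (1 + C / √(n : ℝ)) := by
          refine Finset.prod_le_prod (fun ψ _ => Finset.sum_nonneg fun a _ =>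
            mul_nonneg (hh_nonneg a) (by positivity)) fun ψ hψ => ?_
          have : S ψ = range (m + 1) := by simp [hS, (mem_erase.1 hψ).1]
          rw [this]
          exact hsum n hn1 m (by linarith)
      _ ≤ (1 + C / √(n : ℝ)) ^ n := by
          rw [Finset.prod_const]
          refine pow_le_pow_right₀ (by linarith [show 0 < C / √(n : ℝ) by positivity]) ?_
          rw [hn, ← AddChar.card_eq (α := G)]
          exact card_le_univ _
      _ ≤ Real.exp (C * √(n : ℝ)) := one_add_div_sqrt_pow_le C hC.le n hn1
      _ ≤ _ := by rw [← Real.exp_nat_mul]; exact Real.exp_le_exp.2 hCm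
  have hdesc : (0.999 * (n : ℝ)) ^ m * (n - m).factorial ≤ n.factorial := by
    have h1 : (n - m).factorial * n.descFactorial m = n.factorial :=
      Nat.factorial_mul_descFactorial hmn.le
    have h2 : ((n + 1 - m : ℕ) : ℝ) ^ m ≤ n.descFactorial m := by
      exact_mod_cast Nat.pow_sub_le_descFactorial n m
    have h3 : 0.999 * (n : ℝ) ≤ ((n + 1 - m : ℕ) : ℝ) := by
      rw [Nat.cast_sub (by omega)]; push_cast; linarith
    rw [← h1]; push_cast
    rw [mul_comm]
    gcongr
    exact le_trans (by gcongr) h2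
  have hx4 : Real.exp (1 / 4) ≤ 4 / 3 := by
    have h1 := Real.add_one_le_exp (-(1 / 4 : ℝ))
    rw [Real.exp_neg] at h1
    have h2 := Real.exp_pos (1 / 4 : ℝ)
    have h3 := mul_le_mul_of_nonneg_right h1 h2.le
    rw [inv_mul_cancel₀ h2.ne'] at h3
    linarith
  have hx5 : Real.exp (5 / 2) ≤ 14.9 := by
    refine le_of_pow_le_pow_left₀ (n := 2) (by norm_num) (by norm_num) ?_
    rw [← Real.exp_nat_mul]
    have : Real.exp ((2 : ℕ) * (5 / 2)) = Real.exp 1 ^ 5 := by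
      rw [← Real.exp_nat_mul]; norm_num
    rw [this]
    calc Real.exp 1 ^ 5 ≤ 2.7182818286 ^ 5 := by gcongr; exact Real.exp_one_lt_d9.le
      _ ≤ _ := by norm_num
  have hk0 : (0 : ℝ) < ((n - m : ℕ) : ℝ) := by exact_mod_cast (by omega : 0 < n - m)
  have hks : 0 < √((n - m : ℕ) : ℝ) := Real.sqrt_pos.2 hk0
  have hpref : √(n : ℝ) ^ (5 * n) / (n.factorial : ℝ) ^ 3 * (z ^ n)⁻¹ *
      (hh (n - m) * z ^ (n - m)) ≤ (1 / 2) ^ m := by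
    have hzn : (z ^ n)⁻¹ * z ^ (n - m) = √(n : ℝ) ^ m / 30 ^ m := by
      have : z ^ n = z ^ (n - m) * z ^ m := by rw [← pow_add]; congr 1; omega
      rw [this, mul_inv, mul_comm (z ^ (n - m))⁻¹, mul_assoc, inv_mul_cancel₀ (by positivity),
        mul_one, hz, div_pow, inv_div]
    calc _ = √(n : ℝ) ^ (5 * n) / (n.factorial : ℝ) ^ 3 * ((z ^ n)⁻¹ * z ^ (n - m)) *
          ((n - m).factorial ^ 3 / √((n - m : ℕ) : ℝ) ^ (5 * (n - m))) := by unfold hh; ring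
      _ ≤ (√(n : ℝ) ^ (5 * m) * √((n - m : ℕ) : ℝ) ^ (5 * (n - m)) * 14.9 ^ m) /
          ((0.999 * (n : ℝ)) ^ m * (n - m).factorial) ^ 3 * (√(n : ℝ) ^ m / 30 ^ m) *
          ((n - m).factorial ^ 3 / √((n - m : ℕ) : ℝ) ^ (5 * (n - m))) := by
          rw [hzn]
          have h1 := sqrt_ratio_le n m hmn
          have h2 : √(n : ℝ) ^ (5 * n) ≤
              √(n : ℝ) ^ (5 * m) * √((n - m : ℕ) : ℝ) ^ (5 * (n - m)) * 14.9 ^ m :=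
            h1.trans (by gcongr)
          gcongr
      _ = (√(n : ℝ) ^ (5 * m) * √(n : ℝ) ^ m / ((n : ℝ) ^ m) ^ 3) * (14.9 / (0.999 ^ 3 * 30)) ^ m := by
          rw [div_pow, mul_pow (0.999 ^ 3 : ℝ), mul_pow, mul_pow, ← pow_mul (0.999 : ℝ) 3, mul_comm 3 m,
            pow_mul (0.999 : ℝ) m 3]
          field_simp
      _ = (14.9 / (0.999 ^ 3 * 30)) ^ m := by
          have : ((n : ℝ) ^ m) ^ 3 = √(n : ℝ) ^ (5 * m) * √(n : ℝ) ^ m := by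
            nth_rw 1 [← Real.sq_sqrt hn0.le]
            rw [← pow_mul, ← pow_mul, ← pow_add]; congr 1; ring
          rw [this, div_self (by positivity), one_mul]
      _ ≤ (1 / 2) ^ m := pow_le_pow_left₀ (by norm_num) (by norm_num) _
  calc ∑ χ : ι → AddChar G ℂ with (supp χ).card = m, ‖fc χ‖ ^ 3
      ≤ ∑ χ : ι → AddChar G ℂ with (∀ ψ, cnt χ ψ ∈ S ψ), ‖fc χ‖ ^ 3 := by
        refine Finset.sum_le_sum_of_subset_of_nonneg ?_ fun _ _ _ => by positivity
        intro χ hχ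
        simp only [mem_filter, mem_univ, true_and] at hχ ⊢
        intro ψ
        have h1 := cnt_zero χ
        by_cases hψ : ψ = 0
        · subst hψ; simp [hS]; omega
        · have := cnt_le_supp χ hψ
          simp [hS, hψ]; omega
    _ ≤ _ := sum_cube_types hc S z hz0
    _ ≤ √(n : ℝ) ^ (5 * n) / (n.factorial : ℝ) ^ 3 * (z ^ n)⁻¹ *
        ((hh (n - m) * z ^ (n - m)) * Real.exp (1 / 4) ^ m) := by rw [← hn]; gcongr
    _ = (√(n : ℝ) ^ (5 * n) / (n.factorial : ℝ) ^ 3 * (z ^ n)⁻¹ *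
        (hh (n - m) * z ^ (n - m))) * Real.exp (1 / 4) ^ m := by ring
    _ ≤ (1 / 2) ^ m * (4 / 3) ^ m := by gcongr
    _ = (2 / 3) ^ m := by rw [← mul_pow]; norm_num

/-! ### Fourier expansion of the number of triples -/

/-- The term at `χ` of the Fourier expansion of the number of triples summing to `f`. -/
def tm (f : ι → G) (χ : ι → AddChar G ℂ) : ℂ := fc χ ^ 3 * ∏ i, χ i (-f i)

lemma norm_tm (f : ι → G) (χ : ι → AddChar G ℂ) : ‖tm f χ‖ = ‖fc χ‖ ^ 3 := by
  rw [tm, norm_mul, norm_pow, norm_prod]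
  simp [AddChar.norm_apply]

/-- The triples of bijections with pointwise sum `f`, bijections being encoded as equivalences. -/
def triples (f : ι → G) : Finset ((ι ≃ G) × (ι ≃ G) × (ι ≃ G)) :=
  univ.filter fun p => ∀ i, p.1 i + p.2.1 i + p.2.2 i = f i

lemma sum_tm (hc : Fintype.card ι = Fintype.card G) (f : ι → G) :
    ∑ χ : ι → AddChar G ℂ, tm f χ = (triples f).card * (Fintype.card G : ℂ) ^ Fintype.card G /
      ((Fintype.card G).factorial : ℂ) ^ 3 := by
  have h1 : ∀ χ : ι → AddChar G ℂ, tm f χ = (∑ p : (ι ≃ G) × (ι ≃ G) × (ι ≃ G),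
      ∏ i, χ i (p.1 i + p.2.1 i + p.2.2 i - f i)) / ((Fintype.card G).factorial : ℂ) ^ 3 := by
    intro χ
    rw [tm, fc, div_pow, div_mul_eq_mul_div]
    congr 1
    have h0 : ∀ S w : ℂ, S ^ 3 * w = S * (S * (S * w)) := fun S w => by ring
    rw [h0, Fintype.sum_prod_type, Finset.sum_mul]
    refine Finset.sum_congr rfl fun p _ => ?_
    rw [Fintype.sum_prod_type, Finset.sum_mul, Finset.mul_sum]
    refine Finset.sum_congr rfl fun q _ => ?_
    rw [Finset.sum_mul, Finset.mul_sum, Finset.mul_sum]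
    refine Finset.sum_congr rfl fun r _ => ?_
    rw [← Finset.prod_mul_distrib, ← Finset.prod_mul_distrib, ← Finset.prod_mul_distrib]
    refine Finset.prod_congr rfl fun i _ => ?_
    rw [sub_eq_add_neg, AddChar.map_add_eq_mul, AddChar.map_add_eq_mul, AddChar.map_add_eq_mul]
    ring
  simp_rw [h1]
  rw [← Finset.sum_div, Finset.sum_comm]
  congr 1
  have h2 : ∀ p : (ι ≃ G) × (ι ≃ G) × (ι ≃ G), ∑ χ : ι → AddChar G ℂ,
      ∏ i, χ i (p.1 i + p.2.1 i + p.2.2 i - f i) =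
      if (∀ i, p.1 i + p.2.1 i + p.2.2 i = f i) then (Fintype.card G : ℂ) ^ Fintype.card G else 0 := by
    intro p
    have h3 := Finset.prod_univ_sum (fun _ : ι => (univ : Finset (AddChar G ℂ)))
      (fun i ψ => ψ (p.1 i + p.2.1 i + p.2.2 i - f i))
    rw [Fintype.piFinset_univ] at h3
    rw [← h3]
    simp_rw [AddChar.sum_apply_eq_ite, sub_eq_zero]
    split_ifs with h
    · simp [h, hc]
    · push Not at h
      obtain ⟨i, hi⟩ := h
      exact Finset.prod_eq_zero (mem_univ i) (by simp [hi])
  simp_rw [h2]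
  rw [← Finset.sum_filter, Finset.sum_const, nsmul_eq_mul, triples]

lemma two_sum_eq_zero : (∑ x : G, x) + ∑ x : G, x = 0 := by
  have : ∑ x : G, x = ∑ x : G, -x := (Equiv.sum_comp (Equiv.neg G) fun x => x).symm
  nth_rw 1 [this]
  rw [Finset.sum_neg_distrib, neg_add_cancel]

lemma addChar_sum {α : Type} (s : Finset α) (ψ : AddChar G ℂ) (g : α → G) :
    ∏ i ∈ s, ψ (g i) = ψ (∑ i ∈ s, g i) := by
  classical
  induction s using Finset.induction_on with
  | empty => simp
  | insert a s ha ih => rw [prod_insert ha, sum_insert ha, AddChar.map_add_eq_mul, ih]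

/-- Shifting all characters by `ψ` multiplies the term by `ψ (3 ΣG - Σ f) = ψ (2 ΣG) = 1`. -/
lemma tm_shift (f : ι → G) (hf : ∑ i, f i = ∑ x : G, x)
    (ψ : AddChar G ℂ) (χ : ι → AddChar G ℂ) : tm f (fun i => ψ + χ i) = tm f χ := by
  have h1 : fc (fun i => ψ + χ i) = ψ (∑ x : G, x) * fc χ := by
    rw [fc, fc, ← mul_div_assoc]
    congr 1
    rw [Finset.mul_sum]
    refine Finset.sum_congr rfl fun π _ => ?_
    simp_rw [AddChar.add_apply]
    rw [Finset.prod_mul_distrib, addChar_sum, Equiv.sum_comp π fun x => x]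
  have h2 : ∏ i, (ψ + χ i) (-f i) = ψ (∑ x : G, x) * ∏ i, χ i (-f i) := by
    simp_rw [AddChar.add_apply]
    rw [Finset.prod_mul_distrib, addChar_sum, Finset.sum_neg_distrib, hf]
    congr 2
    exact neg_eq_of_add_eq_zero_left two_sum_eq_zero
  have h3 : ψ (∑ x : G, x) * ψ (∑ x : G, x) = 1 := by
    rw [← AddChar.map_add_eq_mul, two_sum_eq_zero, AddChar.map_zero_eq_one]
  rw [tm, tm, h1, h2]
  calc _ = (ψ (∑ x : G, x) * ψ (∑ x : G, x)) ^ 2 * (fc χ ^ 3 * ∏ i, χ i (-f i)) := by ring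
    _ = _ := by rw [h3, one_pow, one_mul]

lemma cnt_add_cnt_le {α D : Type} [Fintype α] [DecidableEq D] (w : α → D) {d e : D} (h : d ≠ e) :
    cnt w d + cnt w e ≤ Fintype.card α := by
  classical
  unfold cnt
  rw [← card_union_of_disjoint]
  · exact card_le_univ _
  · rw [disjoint_filter]; rintro i _ rfl; exact h

/-- Every word in which some letter `ψ` fills more than 99.9% of the slots is the shift by this
unique `ψ` of a word with small support; by `tm_shift` these words contribute `n` times the sum over
small supports. -/
lemma sum_tm_split (hc : Fintype.card ι = Fintype.card G) (f : ι → G)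
    (hf : ∑ i, f i = ∑ x : G, x) :
    ∑ χ : ι → AddChar G ℂ, tm f χ =
      Fintype.card G * ∑ χ : ι → AddChar G ℂ with 1000 * (supp χ).card < Fintype.card G, tm f χ +
      ∑ χ : ι → AddChar G ℂ with (∀ ψ, 1000 * cnt χ ψ ≤ 999 * Fintype.card G), tm f χ := by
  set n := Fintype.card G with hn
  have hn1 : 1 ≤ n := Fintype.card_pos
  rw [← Finset.sum_filter_not_add_sum_filter univ
    (fun χ : ι → AddChar G ℂ => ∀ ψ, 1000 * cnt χ ψ ≤ 999 * n)]
  congr 1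
  have h1 : ∀ χ : ι → AddChar G ℂ, (if ¬ (∀ ψ, 1000 * cnt χ ψ ≤ 999 * n) then tm f χ else 0) =
      ∑ ψ : AddChar G ℂ, if 999 * n < 1000 * cnt χ ψ then tm f χ else 0 := by
    intro χ
    by_cases h : ¬ (∀ ψ, 1000 * cnt χ ψ ≤ 999 * n)
    · rw [if_pos h]
      push Not at h
      obtain ⟨ψ, hψ⟩ := h
      rw [Finset.sum_eq_single ψ]
      · rw [if_pos hψ]
      · intro φ _ hφ
        rw [if_neg]
        have := cnt_add_cnt_le χ hφ
        omega
      · simp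
    · rw [if_neg h]
      push Not at h
      symm
      refine Finset.sum_eq_zero fun ψ _ => ?_
      rw [if_neg (by have := h ψ; omega)]
  rw [Finset.sum_filter, Finset.sum_congr rfl fun χ _ => h1 χ, Finset.sum_comm]
  have h2 : ∀ ψ : AddChar G ℂ, ∑ χ : ι → AddChar G ℂ, (if 999 * n < 1000 * cnt χ ψ then tm f χ else 0)
      = ∑ χ : ι → AddChar G ℂ with 1000 * (supp χ).card < n, tm f χ := by
    intro ψ
    rw [Finset.sum_filter]
    rw [← Equiv.sum_comp (Equiv.addLeft (fun _ : ι => ψ))]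
    refine Finset.sum_congr rfl fun χ _ => ?_
    have e1 : (Equiv.addLeft (fun _ : ι => ψ)) χ = fun i => ψ + χ i := rfl
    have e2 : cnt (fun i => ψ + χ i) ψ = cnt χ 0 := by simp [cnt]
    rw [e1, e2, tm_shift f hf]
    have := cnt_zero χ
    congr 1
    rw [eq_iff_iff]
    omega
  rw [Finset.sum_congr rfl fun ψ _ => h2 ψ, Finset.sum_const, card_univ, AddChar.card_eq,
    nsmul_eq_mul]

lemma card_triples (f : ι → G) : (triples f).card =
    Nat.card {p : (ι → G) × (ι → G) × (ι → G) // Function.Bijective p.1 ∧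
      Function.Bijective p.2.1 ∧ Function.Bijective p.2.2 ∧ p.1 + p.2.1 + p.2.2 = f} := by
  rw [triples, ← Fintype.card_subtype, ← Nat.card_eq_fintype_card]
  refine Nat.card_congr
    { toFun := fun p => ⟨(p.1.1, p.1.2.1, p.1.2.2), p.1.1.bijective, p.1.2.1.bijective,
        p.1.2.2.bijective, funext p.2⟩
      invFun := fun p => ⟨(Equiv.ofBijective _ p.2.1, Equiv.ofBijective _ p.2.2.1,
        Equiv.ofBijective _ p.2.2.2.1), fun i => congrFun p.2.2.2.2 i⟩
      left_inv := ?_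
      right_inv := ?_ }
  · rintro ⟨⟨p, q, r⟩, h⟩
    exact Subtype.ext (Prod.ext (Equiv.ext fun _ => rfl)
      (Prod.ext (Equiv.ext fun _ => rfl) (Equiv.ext fun _ => rfl)))
  · rintro ⟨⟨p, q, r⟩, h⟩
    rfl

/-! ### Cubing the merge recursion -/

lemma norm_sum_cube_le {α : Type} (s : Finset α) (x : α → ℂ) (k : ℕ) (hs : s.card ≤ k) :
    ‖∑ j ∈ s, x j‖ ^ 3 ≤ k ^ 2 * ∑ j ∈ s, ‖x j‖ ^ 3 := by
  have h0 : 0 ≤ ∑ j ∈ s, ‖x j‖ ^ 3 := Finset.sum_nonneg fun _ _ => by positivity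
  have h1 : (∑ j ∈ s, ‖x j‖) ^ 3 ≤ (s.card : ℝ) ^ 2 * ∑ j ∈ s, ‖x j‖ ^ 3 :=
    pow_sum_le_card_mul_sum_pow (fun _ _ => norm_nonneg _) 2
  calc ‖∑ j ∈ s, x j‖ ^ 3 ≤ (∑ j ∈ s, ‖x j‖) ^ 3 := by gcongr; exact norm_sum_le _ _
    _ ≤ _ := h1
    _ ≤ _ := by gcongr

/-- The weight `η` allows the main part `u` to enter with an arbitrarily small constant. -/
lemma cube_perturb (u v : ℂ) (η : ℝ) (hη : 0 < η) (hη1 : η ≤ 1) :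
    ‖(u + v) ^ 3 - u ^ 3‖ ≤ η * ‖u‖ ^ 3 + 127 / η ^ 2 * ‖v‖ ^ 3 := by
  have h0 : ‖(u + v) ^ 3 - u ^ 3‖ ≤ 3 * ‖u‖ ^ 2 * ‖v‖ + 3 * ‖u‖ * ‖v‖ ^ 2 + ‖v‖ ^ 3 := by
    rw [show (u + v) ^ 3 - u ^ 3 = 3 * u ^ 2 * v + 3 * u * v ^ 2 + v ^ 3 by ring]
    refine (norm_add₃_le).trans (le_of_eq ?_)
    simp [norm_pow]
  refine h0.trans ?_
  set a := ‖u‖ with ha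
  set b := ‖v‖ with hb
  have ha0 : 0 ≤ a := norm_nonneg _
  have hb0 : 0 ≤ b := norm_nonneg _
  have hη2 : (1 : ℝ) ≤ 1 / η ^ 2 := by
    rw [le_div_iff₀ (by positivity)]; nlinarith
  rcases le_total (6 * b) (η * a) with h | h
  · have h1 : 3 * a ^ 2 * b ≤ η * a ^ 3 / 2 := by nlinarith [sq_nonneg a]
    have h2 : 3 * a * b ^ 2 ≤ η * a ^ 3 / 2 := by
      have : 6 * b ≤ a := by nlinarith
      nlinarith [mul_nonneg ha0 hb0, sq_nonneg a]
    have h3 : b ^ 3 ≤ 127 / η ^ 2 * b ^ 3 := by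
      have : (1 : ℝ) ≤ 127 / η ^ 2 := by
        rw [show 127 / η ^ 2 = 127 * (1 / η ^ 2) by ring]; linarith
      have hb3 : 0 ≤ b ^ 3 := by positivity
      nlinarith
    linarith
  · have h1 : a ≤ 6 * b / η := by rw [le_div_iff₀ hη]; linarith
    have h1' : 1 / η ≤ 1 / η ^ 2 := by
      apply one_div_le_one_div_of_le (by positivity); nlinarith
    have hb3 : 0 ≤ b ^ 3 := by positivity
    calc 3 * a ^ 2 * b + 3 * a * b ^ 2 + b ^ 3
        ≤ 3 * (6 * b / η) ^ 2 * b + 3 * (6 * b / η) * b ^ 2 + b ^ 3 := by gcongr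
      _ = (108 * (1 / η ^ 2) + 18 * (1 / η) + 1) * b ^ 3 := by field_simp; ring
      _ ≤ (127 * (1 / η ^ 2)) * b ^ 3 := by gcongr; linarith
      _ = 127 / η ^ 2 * b ^ 3 := by ring
      _ ≤ _ := by have : 0 ≤ η * a ^ 3 := by positivity
                  linarith

/-- The cube of a sum over `P` is close to the sum of the cubes over `J`, up to the terms outside `J`;
the terms of `J` count as an error only when there are at least two of them. -/
lemma cube_approx {α : Type} [DecidableEq α] (P J : Finset α) (hJ : J ⊆ P) (x : α → ℂ) (k : ℕ)
    (hP : P.card ≤ k) (η : ℝ) (hη : 0 < η) (hη1 : η ≤ 1) :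
    ‖(∑ j ∈ P, x j) ^ 3 - ∑ j ∈ J, x j ^ 3‖ ≤ η * ∑ j ∈ J, ‖x j‖ ^ 3 +
      127 * (k ^ 2 + 1) / η ^ 2 * (∑ j ∈ P \ J, ‖x j‖ ^ 3 +
        if 2 ≤ J.card then ∑ j ∈ J, ‖x j‖ ^ 3 else 0) := by
  have hη2 : (1 : ℝ) ≤ 1 / η ^ 2 := by
    rw [le_div_iff₀ (by positivity)]; nlinarith
  have hs1 : 0 ≤ ∑ j ∈ J, ‖x j‖ ^ 3 := Finset.sum_nonneg fun _ _ => by positivity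
  have hs2 : 0 ≤ ∑ j ∈ P \ J, ‖x j‖ ^ 3 := Finset.sum_nonneg fun _ _ => by positivity
  split_ifs with h
  · have e : ∑ j ∈ P \ J, ‖x j‖ ^ 3 + ∑ j ∈ J, ‖x j‖ ^ 3 = ∑ j ∈ P, ‖x j‖ ^ 3 :=
      Finset.sum_sdiff hJ
    rw [e]
    have h1 : ‖(∑ j ∈ P, x j) ^ 3‖ ≤ k ^ 2 * ∑ j ∈ P, ‖x j‖ ^ 3 := by
      rw [norm_pow]; exact norm_sum_cube_le P x k hP
    have h2 : ‖∑ j ∈ J, x j ^ 3‖ ≤ ∑ j ∈ P, ‖x j‖ ^ 3 := by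
      refine (norm_sum_le _ _).trans ?_
      simp_rw [norm_pow]
      linarith
    have h3 := norm_sub_le ((∑ j ∈ P, x j) ^ 3) (∑ j ∈ J, x j ^ 3)
    have h4 : ((k : ℝ) ^ 2 + 1) ≤ 127 * (k ^ 2 + 1) / η ^ 2 := by
      rw [show 127 * ((k : ℝ) ^ 2 + 1) / η ^ 2 = 127 * (k ^ 2 + 1) * (1 / η ^ 2) by ring]
      have : (0 : ℝ) ≤ k ^ 2 + 1 := by positivity
      nlinarith
    have h5 := mul_le_mul_of_nonneg_right h4 (by linarith : 0 ≤ ∑ j ∈ P, ‖x j‖ ^ 3)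
    have h6 : 0 ≤ η * ∑ j ∈ J, ‖x j‖ ^ 3 := by positivity
    linarith
  · have hJ1 : ∑ j ∈ J, x j ^ 3 = (∑ j ∈ J, x j) ^ 3 ∧
        ‖∑ j ∈ J, x j‖ ^ 3 = ∑ j ∈ J, ‖x j‖ ^ 3 := by
      have : J.card = 0 ∨ J.card = 1 := by omega
      rcases this with h | h
      · rw [card_eq_zero] at h; subst h; simp
      · obtain ⟨j, rfl⟩ := card_eq_one.1 h; simp
    rw [hJ1.1, ← Finset.sum_sdiff hJ, add_comm (∑ j ∈ P \ J, x j), add_zero, ← hJ1.2]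
    refine (cube_perturb _ _ η hη hη1).trans (add_le_add le_rfl ?_)
    have h7 := norm_sum_cube_le (P \ J) x k ((card_le_card sdiff_subset).trans hP)
    calc 127 / η ^ 2 * ‖∑ j ∈ P \ J, x j‖ ^ 3 ≤ 127 / η ^ 2 * (k ^ 2 * ∑ j ∈ P \ J, ‖x j‖ ^ 3) := by
          gcongr
      _ ≤ 127 / η ^ 2 * ((k ^ 2 + 1) * ∑ j ∈ P \ J, ‖x j‖ ^ 3) := by gcongr; linarith
      _ = _ := by ring

/-- For fixed `i ≠ j`, `χ` is recovered from `merge χ i j` and `χ i`. -/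
lemma sum_merge_reindex {M : Type} [AddCommMonoid M] {i j : ι} (h : i ≠ j)
    (F : (ι → AddChar G ℂ) → AddChar G ℂ → M) :
    ∑ χ : ι → AddChar G ℂ, F (merge χ i j) (χ i) =
      ∑ χ : ι → AddChar G ℂ with χ i = 0, ∑ ψ, F χ ψ := by
  rw [← Finset.sum_product']
  refine Finset.sum_bij' (fun χ _ => (merge χ i j, χ i))
    (fun p _ => Function.update (Function.update p.1 i p.2) j (p.1 j - p.2)) ?_ ?_ ?_ ?_ ?_
  · intro χ _
    simp [merge_left χ h]
  · simp
  · intro χ _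
    funext l
    by_cases hj : l = j
    · subst hj; simp [merge_right]
    · by_cases hi : l = i
      · subst hi; simp [hj]
      · simp [hi, hj, merge_of_ne]
  · rintro ⟨χ, ψ⟩ hp
    simp only [mem_product, mem_filter, mem_univ, true_and, and_true] at hp
    simp only [Prod.mk.injEq]
    refine ⟨?_, by simp [h]⟩
    funext l
    by_cases hj : l = j
    · subst hj; rw [merge_right]; simp [h]
    · by_cases hi : l = i
      · subst hi; rw [merge_left _ h, hp]
      · rw [merge_of_ne _ hi hj]; simp [hi, hj]
  · simp

lemma sum_pairs {M : Type} [AddCommMonoid M] (m : ℕ) (Q : (ι → AddChar G ℂ) → ι → ι → Prop)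
    [∀ χ i j, Decidable (Q χ i j)] (g : (ι → AddChar G ℂ) → ι → ι → M) :
    ∑ χ : ι → AddChar G ℂ with (supp χ).card = m, ∑ i ∈ supp χ,
      ∑ j ∈ (supp χ).erase i with Q χ i j, g χ i j =
    ∑ i, ∑ j ∈ univ.erase i, ∑ χ : ι → AddChar G ℂ,
      if ((supp χ).card = m ∧ i ∈ supp χ ∧ j ∈ (supp χ).erase i ∧ Q χ i j) then g χ i j else 0 := by
  rw [Finset.sum_congr rfl fun i _ => Finset.sum_comm, Finset.sum_comm, Finset.sum_filter]
  refine Finset.sum_congr rfl fun χ _ => ?_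
  split_ifs with h
  · rw [← Finset.sum_subset (subset_univ (supp χ))]
    · refine Finset.sum_congr rfl fun i hi => ?_
      rw [← Finset.sum_filter]
      refine Finset.sum_congr ?_ fun _ _ => rfl
      ext j
      simp only [mem_filter, mem_erase, mem_univ]
      tauto
    · intro i _ hi
      exact Finset.sum_eq_zero fun j _ => if_neg (by tauto)
  · symm
    exact Finset.sum_eq_zero fun i _ => Finset.sum_eq_zero fun j _ => if_neg (by tauto)

/-- By `sum_merge_reindex`, a bound in terms of the merged word and the letter `χ i` can be summed
freely over both. -/
lemma sum_pairs_le (m : ℕ) (Q : (ι → AddChar G ℂ) → ι → ι → Prop)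
    [∀ χ i j, Decidable (Q χ i j)] (g : (ι → AddChar G ℂ) → ι → ι → ℝ)
    (F : ι → (ι → AddChar G ℂ) → AddChar G ℂ → ℝ) (hF : ∀ j χ ψ, 0 ≤ F j χ ψ)
    (h : ∀ χ i j, (supp χ).card = m → i ∈ supp χ → j ∈ (supp χ).erase i → Q χ i j →
      g χ i j ≤ F j (merge χ i j) (χ i)) :
    ∑ χ : ι → AddChar G ℂ with (supp χ).card = m, ∑ i ∈ supp χ,
      ∑ j ∈ (supp χ).erase i with Q χ i j, g χ i j ≤
    Fintype.card ι * ∑ j, ∑ χ, ∑ ψ, F j χ ψ := by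
  rw [sum_pairs, ← nsmul_eq_mul, ← card_univ, ← Finset.sum_const]
  refine Finset.sum_le_sum fun i _ => ?_
  refine le_trans (Finset.sum_le_sum fun j hj => ?_)
    (Finset.sum_le_sum_of_subset_of_nonneg (subset_univ (univ.erase i)) fun j _ _ =>
      Finset.sum_nonneg fun χ _ => Finset.sum_nonneg fun ψ _ => hF j χ ψ)
  calc _ ≤ ∑ χ : ι → AddChar G ℂ, F j (merge χ i j) (χ i) := by
        refine Finset.sum_le_sum fun χ _ => ?_
        split_ifs with h1
        · exact h χ i j h1.1 h1.2.1 h1.2.2.1 h1.2.2.2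
        · exact hF _ _ _
    _ = _ := sum_merge_reindex (by simpa using (mem_erase.1 hj).1.symm) (F j)
    _ ≤ _ := Finset.sum_le_sum_of_subset_of_nonneg (filter_subset _ _)
        fun χ _ _ => Finset.sum_nonneg fun ψ _ => hF j χ ψ

/-! ### The contribution of cancelling pairs -/

variable (ι G) in
/-- The `ℓ³`-mass of the Fourier coefficients whose support has exactly `m` elements. -/
def bb (m : ℕ) : ℝ := ∑ χ : ι → AddChar G ℂ with (supp χ).card = m, ‖fc χ‖ ^ 3

/-- The part of the Fourier expansion of the triple count carried by supports of size `m`. -/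
def lev (f : ι → G) (m : ℕ) : ℂ := ∑ χ : ι → AddChar G ℂ with (supp χ).card = m, tm f χ

lemma bb_nonneg (m : ℕ) : 0 ≤ bb ι G m := Finset.sum_nonneg fun _ _ => by positivity

lemma norm_lev_le (f : ι → G) (m : ℕ) : ‖lev f m‖ ≤ bb ι G m := by
  refine (norm_sum_le _ _).trans (le_of_eq ?_)
  exact Finset.sum_congr rfl fun χ _ => norm_tm f χ

lemma bb_le (hc : Fintype.card ι = Fintype.card G) (m : ℕ) (hm : 10 ^ 6 * m ≤ Fintype.card G) :
    bb ι G m ≤ 2 ^ m := by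
  rw [bb, sum_level]
  calc _ ≤ ∑ A ∈ powersetCard m (univ : Finset ι), dd (Fintype.card G) m ^ 2 := by
        refine Finset.sum_le_sum fun A hA => ?_
        have h := sum_cube_supp_le (G := G) hc A
        rwa [(mem_powersetCard.1 hA).2] at h
    _ = ((Fintype.card G).choose m : ℝ) * dd (Fintype.card G) m ^ 2 := by
        rw [Finset.sum_const, card_powersetCard, card_univ, hc, nsmul_eq_mul]
    _ ≤ (1.005 : ℝ) ^ (2 * m) := choose_mul_dd_sq_le _ Fintype.card_pos m hm
    _ ≤ 2 ^ m := by
        rw [pow_mul]; gcongr; norm_num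

lemma card_addChar : (univ : Finset (AddChar G ℂ)).card = Fintype.card G := by
  rw [card_univ, AddChar.card_eq]

/-- Pairs that do not cancel: the merged word has support of size `m + 1`, and `j` lies in it. -/
lemma err_one (hc : Fintype.card ι = Fintype.card G) (m : ℕ) :
    ∑ χ : ι → AddChar G ℂ with (supp χ).card = m + 2, ∑ i ∈ supp χ,
      ∑ j ∈ (supp χ).erase i with ¬ (χ i + χ j = 0), ‖fc (merge χ i j)‖ ^ 3 ≤
    (Fintype.card G : ℝ) ^ 2 * ((m + 1) * bb ι G (m + 1)) := by
  refine (sum_pairs_le (m + 2) (fun χ i j => ¬ (χ i + χ j = 0)) _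
    (fun j χ _ => if (supp χ).card = m + 1 ∧ j ∈ supp χ then ‖fc χ‖ ^ 3 else 0) ?_ ?_).trans ?_
  · intro j χ ψ; split_ifs <;> positivity
  · intro χ i j h1 hi hj hQ
    have hs := supp_merge_of_ne hj hQ
    rw [if_pos]
    rw [hs, card_erase_of_mem hi, h1]
    exact ⟨rfl, hj⟩
  · simp_rw [Finset.sum_const, card_addChar, nsmul_eq_mul]
    simp_rw [← Finset.mul_sum]
    rw [Finset.sum_comm, hc]
    have : ∑ χ : ι → AddChar G ℂ, ∑ j, (if (supp χ).card = m + 1 ∧ j ∈ supp χ then ‖fc χ‖ ^ 3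
        else 0) = (m + 1) * bb ι G (m + 1) := by
      rw [bb, Finset.mul_sum, Finset.sum_filter]
      refine Finset.sum_congr rfl fun χ _ => ?_
      split_ifs with h
      · simp only [h, true_and]
        rw [← Finset.sum_filter, Finset.sum_const, filter_univ_mem, h, nsmul_eq_mul]
        push_cast; ring
      · simp [h]
    rw [this]
    exact le_of_eq (by ring)

/-- Cancelling pairs: the merged word has support of size `m`. -/
lemma err_two (hc : Fintype.card ι = Fintype.card G) (m : ℕ) :
    ∑ χ : ι → AddChar G ℂ with (supp χ).card = m + 2, ∑ i ∈ supp χ,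
      ∑ j ∈ (supp χ).erase i with χ i + χ j = 0, ‖fc (merge χ i j)‖ ^ 3 ≤
    (Fintype.card G : ℝ) ^ 3 * bb ι G m := by
  refine (sum_pairs_le (m + 2) (fun χ i j => χ i + χ j = 0) _
    (fun _ χ _ => if (supp χ).card = m then ‖fc χ‖ ^ 3 else 0) ?_ ?_).trans ?_
  · intro j χ ψ; split_ifs <;> positivity
  · intro χ i j h1 hi hj hQ
    have hs := supp_merge_of_eq hj hQ
    rw [if_pos]
    rw [hs, card_erase_of_mem hj, card_erase_of_mem hi, h1]
    rfl
  · simp_rw [Finset.sum_const, card_addChar, nsmul_eq_mul]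
    rw [← Finset.mul_sum, card_univ, hc, ← Finset.sum_filter, ← bb]
    exact le_of_eq (by ring)

/-- Cancelling pairs for which `i` has a further partner `l`: then the value `-χ i` is still
attained on the support of the merged word, which leaves at most `m` choices for `χ i`. -/
lemma err_three (hc : Fintype.card ι = Fintype.card G) (m : ℕ) :
    ∑ χ : ι → AddChar G ℂ with (supp χ).card = m + 2, ∑ i ∈ supp χ,
      ∑ j ∈ (supp χ).erase i with (χ i + χ j = 0 ∧ 2 ≤ (partners χ i).card),
        ‖fc (merge χ i j)‖ ^ 3 ≤
    (Fintype.card G : ℝ) ^ 2 * (m * bb ι G m) := by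
  refine (sum_pairs_le (m + 2) (fun χ i j => χ i + χ j = 0 ∧ 2 ≤ (partners χ i).card) _
    (fun _ χ ψ => if (supp χ).card = m ∧ ψ ∈ (supp χ).image (fun l => -χ l) then
      ‖fc χ‖ ^ 3 else 0) ?_ ?_).trans ?_
  · intro j χ ψ; split_ifs <;> positivity
  · intro χ i j h1 hi hj hQ
    have hs := supp_merge_of_eq hj hQ.1
    rw [if_pos]
    constructor
    · rw [hs, card_erase_of_mem hj, card_erase_of_mem hi, h1]
      rfl
    · obtain ⟨l, hl, hlj⟩ := Finset.exists_mem_ne (by omega : 1 < (partners χ i).card) j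
      rw [partners, mem_filter] at hl
      rw [mem_image]
      refine ⟨l, by rw [hs]; exact mem_erase.2 ⟨hlj, hl.1⟩, ?_⟩
      rw [merge_of_ne χ (mem_erase.1 hl.1).1 hlj]
      exact (eq_neg_of_add_eq_zero_left hl.2).symm
  · rw [Finset.sum_const, card_univ, hc, nsmul_eq_mul]
    have : ∑ χ : ι → AddChar G ℂ, ∑ ψ, (if (supp χ).card = m ∧
        ψ ∈ (supp χ).image (fun l => -χ l) then ‖fc χ‖ ^ 3 else 0) ≤ m * bb ι G m := by
      rw [bb, Finset.mul_sum, Finset.sum_filter]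
      refine Finset.sum_le_sum fun χ _ => ?_
      split_ifs with h
      · simp only [h, true_and]
        rw [← Finset.sum_filter, Finset.sum_const, filter_univ_mem, nsmul_eq_mul]
        gcongr
        exact card_image_le.trans h.le
      · simp [h]
    calc _ ≤ (Fintype.card G : ℝ) * (Fintype.card G * (m * bb ι G m)) := by gcongr
      _ = _ := by ring

lemma prod_merge (f : ι → G) (χ : ι → AddChar G ℂ) {i j : ι} (h : i ≠ j) (h0 : χ i + χ j = 0) :
    ∏ l, χ l (-f l) = (∏ l, merge χ i j l (-f l)) * χ i (f j - f i) := by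
  have hj : j ∈ univ.erase i := by simp [h.symm]
  rw [← Finset.mul_prod_erase univ _ (mem_univ i), ← Finset.mul_prod_erase _ _ hj,
    ← Finset.mul_prod_erase univ (fun l => merge χ i j l (-f l)) (mem_univ i),
    ← Finset.mul_prod_erase _ (fun l => merge χ i j l (-f l)) hj, merge_left χ h, merge_right, h0]
  have e : ∏ l ∈ (univ.erase i).erase j, merge χ i j l (-f l) =
      ∏ l ∈ (univ.erase i).erase j, χ l (-f l) := by
    refine Finset.prod_congr rfl fun l hl => ?_
    simp only [mem_erase, mem_univ, and_true] at hl
    rw [merge_of_ne χ hl.2 hl.1]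
  rw [e, eq_neg_of_add_eq_zero_right h0, AddChar.neg_apply, neg_neg, sub_eq_add_neg,
    AddChar.map_add_eq_mul]
  simp only [AddChar.zero_apply, one_mul]
  ring

/-- The number of pairs `(i, j)` with `f i = f j`; this is `∑ x, |f⁻¹(x)|²`. -/
def coll (f : ι → G) : ℝ := ∑ i, ∑ j, if f i = f j then 1 else 0

/-- The exact contribution of the cancelling pairs, sorted by the merged word: two of its trivial
slots `i ≠ j` receive `ψ` and `-ψ`, and `∑ ψ (f j - f i)` over `ψ ≠ 0` is `n 1_{f i = f j} - 1`. -/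
lemma main_eq (f : ι → G) (m : ℕ) :
    ∑ χ : ι → AddChar G ℂ with (supp χ).card = m + 2, ∑ i ∈ supp χ,
      ∑ j ∈ (supp χ).erase i with χ i + χ j = 0, fc (merge χ i j) ^ 3 * ∏ l, χ l (-f l) =
    ∑ χ : ι → AddChar G ℂ with (supp χ).card = m, tm f χ * ∑ i, ∑ j,
      if χ i = 0 ∧ χ j = 0 ∧ i ≠ j then ((if f i = f j then (Fintype.card G : ℂ) else 0) - 1)
        else 0 := by
  rw [sum_pairs]
  have h1 : ∀ i, ∀ j ∈ univ.erase i, ∑ χ : ι → AddChar G ℂ,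
      (if ((supp χ).card = m + 2 ∧ i ∈ supp χ ∧ j ∈ (supp χ).erase i ∧ χ i + χ j = 0) then
        fc (merge χ i j) ^ 3 * ∏ l, χ l (-f l) else 0) =
      ∑ χ : ι → AddChar G ℂ with (supp χ).card = m,
        tm f χ * if χ i = 0 ∧ χ j = 0 ∧ i ≠ j then
          ((if f i = f j then (Fintype.card G : ℂ) else 0) - 1) else 0 := by
    intro i j hj
    have hij : i ≠ j := by simpa using (mem_erase.1 hj).1.symm
    have h2 : ∀ χ : ι → AddChar G ℂ,
      (if ((supp χ).card = m + 2 ∧ i ∈ supp χ ∧ j ∈ (supp χ).erase i ∧ χ i + χ j = 0) then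
        fc (merge χ i j) ^ 3 * ∏ l, χ l (-f l) else 0) =
      (fun χ' ψ => if ((supp χ').card = m ∧ χ' j = 0 ∧ ψ ≠ 0) then
        tm f χ' * ψ (f j - f i) else 0) (merge χ i j) (χ i) := by
      intro χ
      dsimp only
      rw [merge_right]
      by_cases h0 : χ i + χ j = 0
      · by_cases hi : χ i = 0
        · rw [if_neg (by simp [hi, mem_supp]), if_neg (by simp [hi])]
        · have hi' : i ∈ supp χ := mem_supp.2 hi
          have hj' : j ∈ (supp χ).erase i := by
            rw [mem_erase, mem_supp]
            refine ⟨hij.symm, fun h => hi ?_⟩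
            rw [h, add_zero] at h0; exact h0
          have hs : (supp (merge χ i j)).card + 2 = (supp χ).card := by
            rw [supp_merge_of_eq hj' h0, ← card_erase_add_one hi', ← card_erase_add_one hj']
          rw [tm, prod_merge f χ hij h0, mul_assoc]
          refine if_congr ?_ rfl rfl
          constructor
          · intro h; exact ⟨by omega, h0, hi⟩
          · intro h; exact ⟨by omega, hi', hj', h0⟩
      · rw [if_neg (by tauto), if_neg (by tauto)]
    rw [Finset.sum_congr rfl fun χ _ => h2 χ, sum_merge_reindex hij
      (fun χ' ψ => if ((supp χ').card = m ∧ χ' j = 0 ∧ ψ ≠ 0) then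
        tm f χ' * ψ (f j - f i) else 0), Finset.sum_filter, Finset.sum_filter]
    refine Finset.sum_congr rfl fun χ _ => ?_
    by_cases hi : χ i = 0
    · rw [if_pos hi]
      by_cases hm : (supp χ).card = m
      · rw [if_pos hm]
        by_cases hj0 : χ j = 0
        · rw [if_pos ⟨hi, hj0, hij⟩]
          simp only [hm, hj0, true_and, ne_eq]
          rw [← Finset.sum_filter, ← Finset.mul_sum]
          congr 1
          have h3 := AddChar.sum_apply_eq_ite (f j - f i)
          rw [← Finset.add_sum_erase univ _ (mem_univ (0 : AddChar G ℂ)), AddChar.zero_apply] at h3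
          rw [show (univ.filter fun ψ : AddChar G ℂ => ¬ ψ = 0) = univ.erase 0 by
            ext; simp, eq_sub_iff_add_eq, add_comm, h3]
          simp only [sub_eq_zero, eq_comm (a := f j)]
        · simp [hj0]
      · simp [hm]
    · simp [hi]
  rw [Finset.sum_congr rfl fun i _ => Finset.sum_congr rfl fun j hj => h1 i j hj]
  rw [Finset.sum_congr rfl fun i _ => Finset.sum_comm, Finset.sum_comm]
  refine Finset.sum_congr rfl fun χ _ => ?_
  rw [Finset.mul_sum]
  refine Finset.sum_congr rfl fun i _ => ?_
  rw [Finset.mul_sum, ← Finset.add_sum_erase univ _ (mem_univ i)]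
  simp

/-- Dropping the conditions on `i` and `j` and the `-1` changes the factor in `main_eq` by `O(n²)`. -/
lemma diag_le (f : ι → G) (hc : Fintype.card ι = Fintype.card G) (m : ℕ) (χ : ι → AddChar G ℂ)
    (hm : (supp χ).card = m) :
    ‖(∑ i, ∑ j, if χ i = 0 ∧ χ j = 0 ∧ i ≠ j then
      ((if f i = f j then (Fintype.card G : ℂ) else 0) - 1) else 0) -
      (Fintype.card G : ℂ) * coll f‖ ≤ (2 * m + 2) * (Fintype.card G : ℝ) ^ 2 := by
  set n := Fintype.card G
  have e : (n : ℂ) * coll f = ∑ i, ∑ j, if f i = f j then (n : ℂ) else 0 := by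
    rw [coll]
    push_cast
    rw [Finset.mul_sum]
    refine Finset.sum_congr rfl fun i _ => ?_
    rw [Finset.mul_sum]
    refine Finset.sum_congr rfl fun j _ => ?_
    split_ifs <;> simp
  rw [e, ← Finset.sum_sub_distrib]
  simp_rw [← Finset.sum_sub_distrib]
  calc _ ≤ ∑ i, ∑ j, ‖(if χ i = 0 ∧ χ j = 0 ∧ i ≠ j then
      ((if f i = f j then (n : ℂ) else 0) - 1) else 0) - (if f i = f j then (n : ℂ) else 0)‖ := by
        refine (norm_sum_le _ _).trans (Finset.sum_le_sum fun i _ => norm_sum_le _ _)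
    _ ≤ ∑ i, ∑ j, (1 + n * ((if j = i then 1 else 0) + (if i ∈ supp χ then 1 else 0) +
          if j ∈ supp χ then 1 else 0) : ℝ) := by
        refine Finset.sum_le_sum fun i _ => Finset.sum_le_sum fun j _ => ?_
        have hn0 : (0 : ℝ) ≤ n := by positivity
        have h3 : ‖(if f i = f j then (n : ℂ) else 0)‖ ≤ n := by split_ifs <;> simp
        by_cases h : χ i = 0 ∧ χ j = 0 ∧ i ≠ j
        · rw [if_pos h, sub_sub_cancel_left, norm_neg, norm_one]
          have : (0 : ℝ) ≤ n * ((if j = i then 1 else 0) + (if i ∈ supp χ then 1 else 0) +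
            if j ∈ supp χ then 1 else 0) := by positivity
          linarith
        · rw [if_neg h, zero_sub, norm_neg]
          have : (1 : ℝ) ≤ ((if j = i then 1 else 0) + (if i ∈ supp χ then 1 else 0) +
            if j ∈ supp χ then 1 else 0) := by
            simp only [mem_supp, eq_comm (a := j)]
            by_cases h1 : χ i = 0 <;> by_cases h2 : χ j = 0 <;> by_cases h4 : i = j <;>
              simp_all
          nlinarith
    _ = _ := by
        simp only [Finset.sum_add_distrib, ← Finset.mul_sum, Finset.sum_const, card_univ, hc,
          nsmul_eq_mul, Finset.sum_ite_eq', Finset.mem_univ, if_true, ← Finset.sum_filter,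
          filter_univ_mem, hm, mul_one]
        ring

lemma main_le (f : ι → G) (hc : Fintype.card ι = Fintype.card G) (m : ℕ) :
    ‖(∑ χ : ι → AddChar G ℂ with (supp χ).card = m + 2, ∑ i ∈ supp χ,
      ∑ j ∈ (supp χ).erase i with χ i + χ j = 0, fc (merge χ i j) ^ 3 * ∏ l, χ l (-f l)) -
      (Fintype.card G : ℂ) * coll f * lev f m‖ ≤
    (2 * m + 2) * (Fintype.card G : ℝ) ^ 2 * bb ι G m := by
  rw [main_eq, lev, Finset.mul_sum, ← Finset.sum_sub_distrib, bb, Finset.mul_sum]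
  refine (norm_sum_le _ _).trans (Finset.sum_le_sum fun χ hχ => ?_)
  rw [mul_comm _ (tm f χ), ← mul_sub, norm_mul, norm_tm, mul_comm]
  gcongr
  exact diag_le f hc m χ (mem_filter.1 hχ).2

/-! ### The recursion between levels -/

/-- The cube of `fc_merge`, averaged over the index `i` of the support. -/
lemma level_cube (f : ι → G) (hc : Fintype.card ι = Fintype.card G) (m : ℕ) :
    (m + 2) * ((Fintype.card G : ℂ) - m - 1) ^ 3 * lev f (m + 2) =
      - ∑ χ : ι → AddChar G ℂ with (supp χ).card = m + 2, ∑ i ∈ supp χ,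
        (∑ j ∈ (supp χ).erase i, fc (merge χ i j)) ^ 3 * ∏ l, χ l (-f l) := by
  rw [lev, Finset.mul_sum, ← Finset.sum_neg_distrib]
  refine Finset.sum_congr rfl fun χ hχ => ?_
  have hm : (supp χ).card = m + 2 := (mem_filter.1 hχ).2
  have h1 : ∀ i ∈ supp χ, (∑ j ∈ (supp χ).erase i, fc (merge χ i j)) ^ 3 * ∏ l, χ l (-f l) =
      - (((Fintype.card G : ℂ) - m - 1) ^ 3 * tm f χ) := by
    intro i hi
    have h := fc_merge χ hc hi
    rw [hm] at h
    have h2 : ∑ j ∈ (supp χ).erase i, fc (merge χ i j) =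
        - (((Fintype.card G : ℂ) - m - 1) * fc χ) := by
      rw [← neg_eq_iff_eq_neg, ← h]; push_cast; ring
    rw [h2, tm]; ring
  rw [Finset.sum_congr rfl h1, Finset.sum_const, hm, nsmul_eq_mul]
  push_cast; ring

/-- Only cancelling pairs matter in `level_cube`: `cube_approx` is applied with `J` the set of
partners of `i`, and the errors are `err_one`, `err_two` and `err_three`. -/
lemma level_ineq (f : ι → G) (hc : Fintype.card ι = Fintype.card G) (m : ℕ)
    (η : ℝ) (hη : 0 < η) (hη1 : η ≤ 1) :
    ‖(m + 2) * ((Fintype.card G : ℂ) - m - 1) ^ 3 * lev f (m + 2) +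
      (Fintype.card G : ℂ) * coll f * lev f m‖ ≤
    η * ((Fintype.card G : ℝ) ^ 3 * bb ι G m) +
      127 * ((m + 2 : ℕ) ^ 2 + 1) / η ^ 2 * ((Fintype.card G : ℝ) ^ 2 * ((m + 1) * bb ι G (m + 1)) +
        (Fintype.card G : ℝ) ^ 2 * (m * bb ι G m)) +
      (2 * m + 2) * (Fintype.card G : ℝ) ^ 2 * bb ι G m := by
  set X := ∑ χ : ι → AddChar G ℂ with (supp χ).card = m + 2, ∑ i ∈ supp χ,
        (∑ j ∈ (supp χ).erase i, fc (merge χ i j)) ^ 3 * ∏ l, χ l (-f l) with hX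
  set Y := ∑ χ : ι → AddChar G ℂ with (supp χ).card = m + 2, ∑ i ∈ supp χ,
      ∑ j ∈ (supp χ).erase i with χ i + χ j = 0, fc (merge χ i j) ^ 3 * ∏ l, χ l (-f l) with hY
  set C : ℝ := 127 * ((m + 2 : ℕ) ^ 2 + 1) / η ^ 2 with hC
  have hC0 : 0 ≤ C := by positivity
  have h1 : ‖X - Y‖ ≤ η * ((Fintype.card G : ℝ) ^ 3 * bb ι G m) +
      C * ((Fintype.card G : ℝ) ^ 2 * ((m + 1) * bb ι G (m + 1)) +
        (Fintype.card G : ℝ) ^ 2 * (m * bb ι G m)) := by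
    have h2 : ‖X - Y‖ ≤ ∑ χ : ι → AddChar G ℂ with (supp χ).card = m + 2, ∑ i ∈ supp χ,
        (η * ∑ j ∈ (supp χ).erase i with χ i + χ j = 0, ‖fc (merge χ i j)‖ ^ 3 +
          C * (∑ j ∈ (supp χ).erase i with ¬ (χ i + χ j = 0), ‖fc (merge χ i j)‖ ^ 3 +
            ∑ j ∈ (supp χ).erase i with (χ i + χ j = 0 ∧ 2 ≤ (partners χ i).card),
              ‖fc (merge χ i j)‖ ^ 3)) := by
      rw [hX, hY, ← Finset.sum_sub_distrib]
      refine (norm_sum_le _ _).trans (Finset.sum_le_sum fun χ hχ => ?_)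
      have hm : (supp χ).card = m + 2 := (mem_filter.1 hχ).2
      rw [← Finset.sum_sub_distrib]
      refine (norm_sum_le _ _).trans (Finset.sum_le_sum fun i hi => ?_)
      rw [← Finset.sum_mul, ← sub_mul, norm_mul]
      have hw : ‖∏ l, χ l (-f l)‖ = 1 := by rw [norm_prod]; simp [AddChar.norm_apply]
      rw [hw, mul_one]
      refine (cube_approx ((supp χ).erase i) (partners χ i) (filter_subset _ _)
        (fun j => fc (merge χ i j)) (m + 2) ?_ η hη hη1).trans (le_of_eq ?_)
      · exact (card_le_card (erase_subset _ _)).trans hm.le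
      · congr 3
        · congr 1
          ext j
          simp only [partners, mem_sdiff, mem_filter]
          tauto
        · by_cases h2 : 2 ≤ (partners χ i).card
          · rw [if_pos h2]
            simp only [h2, and_true]
            rfl
          · rw [if_neg h2]
            simp [h2]
    refine h2.trans ?_
    simp_rw [Finset.sum_add_distrib, ← Finset.mul_sum, Finset.sum_add_distrib]
    have e1 := err_one (G := G) hc m
    have e2 := err_two (G := G) hc m
    have e3 := err_three (G := G) hc m
    gcongr
  have h3 := main_le f hc m
  rw [level_cube f hc m, ← hX]
  rw [← hY] at h3
  calc _ = ‖-(X - Y) - (Y - (Fintype.card G : ℂ) * coll f * lev f m)‖ := by congr 1; ring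
    _ ≤ ‖X - Y‖ + ‖Y - (Fintype.card G : ℂ) * coll f * lev f m‖ := by
        refine (norm_sub_le _ _).trans ?_
        rw [norm_neg]
    _ ≤ _ := by linarith

lemma coll_nonneg (f : ι → G) : 0 ≤ coll f :=
  Finset.sum_nonneg fun _ _ => Finset.sum_nonneg fun _ _ => by split_ifs <;> norm_num

lemma coll_le (f : ι → G) (hc : Fintype.card ι = Fintype.card G) :
    coll f ≤ (Fintype.card G : ℝ) ^ 2 := by
  calc coll f ≤ ∑ _i : ι, ∑ _j : ι, (1 : ℝ) :=
        Finset.sum_le_sum fun _ _ => Finset.sum_le_sum fun _ _ => by split_ifs <;> norm_num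
    _ = _ := by simp [hc, sq]

/-- The approximate two-step recursion between levels. -/
lemma level_rec (m : ℕ) (ε : ℝ) (hε : 0 < ε) : ∃ N : ℕ, ∀ (ι G : Type) [Fintype ι] [DecidableEq ι]
    [AddCommGroup G] [Fintype G] [DecidableEq G], Fintype.card ι = Fintype.card G →
    N ≤ Fintype.card G → ∀ f : ι → G,
    ‖(m + 2) * lev f (m + 2) + (coll f / (Fintype.card G : ℝ) ^ 2 : ℝ) * lev f m‖ ≤ ε := by
  set η : ℝ := min 1 (ε / (2 * 2 ^ m)) with hη
  have hη0 : 0 < η := by positivity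
  have hη1 : η ≤ 1 := min_le_left _ _
  have hη2 : η * 2 ^ m ≤ ε / 2 := by
    calc η * 2 ^ m ≤ ε / (2 * 2 ^ m) * 2 ^ m := by gcongr; exact min_le_right _ _
      _ = ε / 2 := by field_simp
  set C : ℝ := 127 * ((m + 2 : ℕ) ^ 2 + 1) / η ^ 2 with hC
  have hC0 : 0 ≤ C := by positivity
  set D : ℝ := C * ((m + 1) * 2 ^ (m + 1) + m * 2 ^ m) + (2 * m + 2) * 2 ^ m +
    (m + 2) * (3 * (m + 1)) * 2 ^ (m + 2) with hD
  have hD0 : 0 ≤ D := by positivity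
  obtain ⟨N, hN⟩ := exists_nat_ge (2 * D / ε)
  refine ⟨max N (10 ^ 6 * (m + 2)), ?_⟩
  intro ι G _ _ _ _ _ hc hn f
  have hl := level_ineq f hc m η hη0 hη1
  have b0 := bb_le (G := G) hc m (by omega)
  have b1 := bb_le (G := G) hc (m + 1) (by omega)
  have b2 := bb_le (G := G) hc (m + 2) (by omega)
  have p0 := bb_nonneg (ι := ι) (G := G) m
  have p1 := bb_nonneg (ι := ι) (G := G) (m + 1)
  have hlev := (norm_lev_le f (m + 2)).trans b2
  have hnm : m + 2 ≤ Fintype.card G := by omega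
  have hNn : 2 * D / ε ≤ Fintype.card G := hN.trans (by exact_mod_cast (by omega))
  set n := Fintype.card G
  rw [← hC] at hl
  have hn0 : (0 : ℝ) < n := by exact_mod_cast (by omega)
  have hnm' : (m : ℝ) + 2 ≤ n := by exact_mod_cast hnm
  have hcube : ‖(n : ℂ) ^ 3 - ((n : ℂ) - m - 1) ^ 3‖ ≤ 3 * (m + 1) * (n : ℝ) ^ 2 := by
    rw [show (n : ℂ) ^ 3 - ((n : ℂ) - m - 1) ^ 3 =
      (((n : ℝ) ^ 3 - ((n : ℝ) - m - 1) ^ 3 : ℝ) : ℂ) by push_cast; ring, Complex.norm_real,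
      Real.norm_eq_abs, abs_le]
    have hm0 : (0 : ℝ) ≤ m := by positivity
    set y : ℝ := (n : ℝ) - m - 1 with hy
    have hy0 : 0 ≤ y := by linarith
    have e : (n : ℝ) ^ 3 - y ^ 3 = (m + 1) * (n ^ 2 + n * y + y ^ 2) := by rw [hy]; ring
    have h1 : n * y ≤ (n : ℝ) ^ 2 := by nlinarith
    have h2 : y ^ 2 ≤ (n : ℝ) ^ 2 := by nlinarith
    rw [e]
    constructor
    · have : (0 : ℝ) ≤ (m + 1) * (n ^ 2 + n * y + y ^ 2) := by positivity
      have : (0 : ℝ) ≤ 3 * (m + 1) * (n : ℝ) ^ 2 := by positivity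
      linarith
    · calc ((m : ℝ) + 1) * (n ^ 2 + n * y + y ^ 2) ≤ (m + 1) * (n ^ 2 + n ^ 2 + n ^ 2) := by gcongr
        _ = _ := by ring
  have hkey : (n : ℝ) ^ 3 * ‖(m + 2) * lev f (m + 2) + (coll f / (n : ℝ) ^ 2 : ℝ) * lev f m‖ ≤
      η * (n ^ 3 * 2 ^ m) + n ^ 2 * D := by
    have hnC : (n : ℂ) ≠ 0 := by exact_mod_cast hn0.ne'
    calc _ = ‖(n : ℂ) ^ 3 * ((m + 2) * lev f (m + 2) + (coll f / (n : ℝ) ^ 2 : ℝ) * lev f m)‖ := by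
          rw [norm_mul, norm_pow, Complex.norm_natCast]
      _ = ‖((m + 2) * ((n : ℂ) - m - 1) ^ 3 * lev f (m + 2) + (n : ℂ) * coll f * lev f m) +
            (m + 2) * ((n : ℂ) ^ 3 - ((n : ℂ) - m - 1) ^ 3) * lev f (m + 2)‖ := by
          congr 1
          push_cast
          field_simp
          ring
      _ ≤ _ + ‖(m + 2) * ((n : ℂ) ^ 3 - ((n : ℂ) - m - 1) ^ 3) * lev f (m + 2)‖ := norm_add_le _ _
      _ ≤ (η * ((n : ℝ) ^ 3 * 2 ^ m) + C * ((n : ℝ) ^ 2 * ((m + 1) * 2 ^ (m + 1)) +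
        (n : ℝ) ^ 2 * (m * 2 ^ m)) + (2 * m + 2) * (n : ℝ) ^ 2 * 2 ^ m) +
          (m + 2) * (3 * (m + 1) * (n : ℝ) ^ 2) * 2 ^ (m + 2) := by
          gcongr
          · refine hl.trans ?_
            gcongr
          · rw [norm_mul, norm_mul]
            have : ‖((m : ℂ) + 2)‖ = m + 2 := by
              rw [show (m : ℂ) + 2 = ((m + 2 : ℕ) : ℂ) by push_cast; ring, Complex.norm_natCast]
              push_cast; ring
            rw [this]
            gcongr
      _ = _ := by rw [hD]; ring
  have hDn : D ≤ ε / 2 * n := by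
    rw [div_le_iff₀ hε] at hNn; linarith
  have h3 : (0 : ℝ) < n ^ 3 := by positivity
  refine le_of_mul_le_mul_left (hkey.trans ?_) h3
  calc η * (n ^ 3 * 2 ^ m) + n ^ 2 * D = n ^ 3 * (η * 2 ^ m) + n ^ 2 * D := by ring
    _ ≤ n ^ 3 * (ε / 2) + n ^ 2 * (ε / 2 * n) := by gcongr
    _ = _ := by ring

lemma lev_zero (f : ι → G) (hc : Fintype.card ι = Fintype.card G) : lev f 0 = 1 := by
  have : (univ.filter fun χ : ι → AddChar G ℂ => (supp χ).card = 0) = {0} := by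
    ext χ
    simp [supp_eq_empty]
  rw [lev, this, Finset.sum_singleton, tm, fc_zero hc]
  simp

lemma lev_one (f : ι → G) (hc : Fintype.card ι = Fintype.card G) : lev f 1 = 0 := by
  refine Finset.sum_eq_zero fun χ hχ => ?_
  rw [tm, fc_eq_zero_of_card_one χ hc (mem_filter.1 hχ).2]
  simp

/-- The limiting value of `lev f m` as a function of `s = coll f / (2 n²)`: the degree-`m` term of
`exp (-s t²)` at `t = 1`. -/
def cc (s : ℝ) (m : ℕ) : ℝ := if Even m then (-s) ^ (m / 2) / (m / 2).factorial else 0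

/-- The exact form of the recursion `level_rec`. -/
lemma cc_rec (s : ℝ) (m : ℕ) : ((m : ℝ) + 2) * cc s (m + 2) = -(2 * s) * cc s m := by
  unfold cc
  by_cases h : Even m
  · rw [if_pos h, if_pos (by simpa [Nat.even_add] using h)]
    obtain ⟨k, rfl⟩ := h
    rw [show (k + k + 2) / 2 = k + 1 by omega, show (k + k) / 2 = k by omega, Nat.factorial_succ]
    have : (k.factorial : ℝ) ≠ 0 := by exact_mod_cast Nat.factorial_ne_zero k
    push_cast
    have : (k : ℝ) + 1 ≠ 0 := by positivity
    field_simp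
    ring
  · rw [if_neg h, if_neg (by simpa [Nat.even_add] using h)]
    simp

lemma lev_approx (m : ℕ) : ∀ ε : ℝ, 0 < ε → ∃ N : ℕ, ∀ (ι G : Type) [Fintype ι] [DecidableEq ι]
    [AddCommGroup G] [Fintype G] [DecidableEq G], Fintype.card ι = Fintype.card G →
    N ≤ Fintype.card G → ∀ f : ι → G,
    ‖lev f m - (cc (coll f / (2 * (Fintype.card G : ℝ) ^ 2)) m : ℝ)‖ ≤ ε := by
  induction m using Nat.twoStepInduction with
  | zero =>
    intro ε hε
    refine ⟨0, ?_⟩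
    intro ι G _ _ _ _ _ hc _ f
    rw [lev_zero f hc]
    simp [cc, hε.le]
  | one =>
    intro ε hε
    refine ⟨0, ?_⟩
    intro ι G _ _ _ _ _ hc _ f
    rw [lev_one f hc]
    simp [cc, hε.le]
  | more m ih _ =>
    intro ε hε
    obtain ⟨N1, h1⟩ := ih (ε / 2) (by positivity)
    obtain ⟨N2, h2⟩ := level_rec m (ε / 2) (by positivity)
    refine ⟨max N1 N2, ?_⟩
    intro ι G _ _ _ _ _ hc hn f
    have a1 := h1 ι G hc (by omega) f
    have a2 := h2 ι G hc (by omega) f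
    have hn0 : (0 : ℝ) < Fintype.card G := by exact_mod_cast Fintype.card_pos
    have hs0 : 0 ≤ coll f / (Fintype.card G : ℝ) ^ 2 := by have := coll_nonneg f; positivity
    have hs1 : coll f / (Fintype.card G : ℝ) ^ 2 ≤ 1 := by
      rw [div_le_one (by positivity)]; exact coll_le f hc
    have e : coll f / (2 * (Fintype.card G : ℝ) ^ 2) = coll f / (Fintype.card G : ℝ) ^ 2 / 2 := by
      field_simp
    rw [e] at a1 ⊢
    set s := coll f / (Fintype.card G : ℝ) ^ 2
    have hr := cc_rec (s / 2) m
    have hr' : ((m : ℂ) + 2) * (cc (s / 2) (m + 2) : ℝ) = -(s : ℂ) * (cc (s / 2) m : ℝ) := by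
      have := congrArg (fun x : ℝ => (x : ℂ)) hr
      push_cast at this ⊢
      rw [this]; ring
    have hm2 : ‖((m : ℂ) + 2)‖ = m + 2 := by
      rw [show (m : ℂ) + 2 = ((m + 2 : ℕ) : ℂ) by push_cast; ring, Complex.norm_natCast]
      push_cast; ring
    have key : ((m : ℝ) + 2) * ‖lev f (m + 2) - (cc (s / 2) (m + 2) : ℝ)‖ ≤ ε / 2 + ε / 2 := by
      rw [← hm2, ← norm_mul]
      calc _ = ‖((m + 2) * lev f (m + 2) + (s : ℂ) * lev f m) -
            s * (lev f m - (cc (s / 2) m : ℝ))‖ := by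
            congr 1
            rw [mul_sub, hr']; ring
        _ ≤ ‖(m + 2) * lev f (m + 2) + (s : ℂ) * lev f m‖ +
            ‖s * (lev f m - (cc (s / 2) m : ℝ))‖ := norm_sub_le _ _
        _ ≤ ε / 2 + 1 * (ε / 2) := by
            gcongr
            rw [norm_mul, Complex.norm_real, Real.norm_of_nonneg hs0]
            gcongr
        _ = _ := by ring
    have hx := norm_nonneg (lev f (m + 2) - (cc (s / 2) (m + 2) : ℝ))
    have hm0 : (0 : ℝ) ≤ m := by positivity
    nlinarith

/-! ### Summing over all levels -/

/-- Counting the pairs with `f i = f j` by their common value. -/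
lemma coll_eq (f : ι → G) : coll f = ∑ x : G, (fiberCard f x : ℝ) ^ 2 := by
  have h : ∀ x, (fiberCard f x : ℝ) = ∑ i, if f i = x then (1 : ℝ) else 0 := by
    intro x
    rw [Finset.sum_boole, fiberCard]
    congr!
  simp_rw [h, sq, Finset.sum_mul_sum, ite_mul, one_mul, zero_mul]
  rw [Finset.sum_comm]
  refine Finset.sum_congr rfl fun i _ => ?_
  rw [Finset.sum_comm]
  refine Finset.sum_congr rfl fun j _ => ?_
  rw [Finset.sum_ite_eq, if_pos (mem_univ _)]
  exact if_congr eq_comm rfl rfl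

/-- Geometric decay of the levels `48 ≤ m ≤ n / 1000`, combining `level_le` below `K √n` with
`sum_medium_le` above. -/
lemma bb_tail : ∃ N : ℕ, ∀ (ι G : Type) [Fintype ι] [DecidableEq ι]
    [AddCommGroup G] [Fintype G] [DecidableEq G], Fintype.card ι = Fintype.card G →
    N ≤ Fintype.card G → ∀ m : ℕ, 48 ≤ m → 1000 * m ≤ Fintype.card G →
    bb ι G m ≤ 3 * 0.99 ^ m + 1 / (Fintype.card G : ℝ) ^ 2 := by
  obtain ⟨K, hK, hmed⟩ := sum_medium_le
  obtain ⟨N, hN⟩ := small_level_le K hK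
  refine ⟨N, ?_⟩
  intro ι G _ _ _ _ _ hc hn m hm hm'
  have h0 : (0 : ℝ) ≤ 0.99 ^ m := by positivity
  rcases le_total (m : ℝ) (K * √(Fintype.card G : ℝ)) with h | h
  · obtain ⟨h1, h2⟩ := hN _ hn m hm h
    have := level_le (G := G) hc m h1
    rw [bb]
    linarith
  · have := hmed ι G hc m h hm'
    have h2 : (2 / 3 : ℝ) ^ m ≤ 0.99 ^ m := by gcongr; norm_num
    have h3 : (0 : ℝ) ≤ 1 / (Fintype.card G : ℝ) ^ 2 := by positivity
    rw [bb]
    linarith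

lemma major_split (f : ι → G) (M : ℕ) (hM : 1000 * M < Fintype.card G) :
    ∑ χ : ι → AddChar G ℂ with 1000 * (supp χ).card < Fintype.card G, tm f χ =
      ∑ m ∈ range M, lev f m +
        ∑ m ∈ Ico M (Fintype.card G) with 1000 * m < Fintype.card G, lev f m := by
  set n := Fintype.card G
  have h1 : ∑ χ : ι → AddChar G ℂ with 1000 * (supp χ).card < n, tm f χ =
      ∑ m ∈ range n with 1000 * m < n, lev f m := by
    rw [← Finset.sum_fiberwise_of_maps_to (t := (range n).filter fun m => 1000 * m < n)
      (g := fun χ => (supp χ).card)]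
    · refine Finset.sum_congr rfl fun m hm => Finset.sum_congr ?_ fun _ _ => rfl
      ext χ
      simp only [mem_filter, mem_univ, true_and, mem_range] at hm ⊢
      constructor
      · exact fun h => h.2
      · intro h; exact ⟨by omega, h⟩
    · intro χ hχ
      simp only [mem_filter, mem_univ, true_and, mem_range] at hχ ⊢
      exact ⟨by omega, hχ⟩
  have h2 : (range n).filter (fun m => 1000 * m < n) =
      range M ∪ (Ico M n).filter (fun m => 1000 * m < n) := by
    ext m
    simp only [mem_filter, mem_range, mem_union, mem_Ico]
    omega
  rw [h1, h2, Finset.sum_union]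
  rw [disjoint_left]
  intro m hm hm'
  simp only [mem_filter, mem_range, mem_Ico] at hm hm'
  omega

/-- The `cc s m` with `m < 2 L` are the first `L` terms of the series of `exp (-s)`, interleaved
with zeros. -/
lemma sum_cc (s : ℝ) (L : ℕ) :
    ∑ m ∈ range (2 * L), cc s m = ∑ k ∈ range L, (-s) ^ k / k.factorial := by
  induction L with
  | zero => simp
  | succ L ih =>
    rw [show 2 * (L + 1) = 2 * L + 1 + 1 by ring, Finset.sum_range_succ, Finset.sum_range_succ, ih,
      Finset.sum_range_succ]
    have h1 : cc s (2 * L) = (-s) ^ L / L.factorial := by simp [cc]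
    have h2 : cc s (2 * L + 1) = 0 := by simp [cc]
    rw [h1, h2, add_zero]

lemma exp_tail (s : ℝ) (h0 : 0 ≤ s) (h1 : s ≤ 1 / 2) (L : ℕ) (hL : 0 < L) :
    |∑ m ∈ range (2 * L), cc s m - Real.exp (-s)| ≤ 2 * 0.99 ^ L := by
  rw [sum_cc, abs_sub_comm]
  have hx : |(-s)| = s := by rw [abs_neg, abs_of_nonneg h0]
  refine (Real.exp_bound (by rw [hx]; linarith) hL).trans ?_
  rw [hx, mul_comm]
  have h2 : ((L.succ : ℝ) / (L.factorial * L)) ≤ 2 := by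
    have hL' : (1 : ℝ) ≤ L := by exact_mod_cast hL
    have hf : (1 : ℝ) ≤ L.factorial := by exact_mod_cast Nat.factorial_pos L
    rw [div_le_iff₀ (by positivity)]
    push_cast
    nlinarith
  have h3 : s ^ L ≤ 0.99 ^ L := by gcongr; linarith
  gcongr

lemma tail_sum_le (f : ι → G) (M n : ℕ) (hn0 : 0 < n)
    (hb : ∀ m, M ≤ m → 1000 * m < n → bb ι G m ≤ 3 * 0.99 ^ m + 1 / (n : ℝ) ^ 2) :
    ‖∑ m ∈ Ico M n with 1000 * m < n, lev f m‖ ≤ 300 * 0.99 ^ M + 1 / n := by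
  have hn : (0 : ℝ) < n := by exact_mod_cast hn0
  calc _ ≤ ∑ m ∈ Ico M n with 1000 * m < n, ‖lev f m‖ := norm_sum_le _ _
    _ ≤ ∑ m ∈ Ico M n with 1000 * m < n, ((3 * 0.99 ^ m + 1 / (n : ℝ) ^ 2)) := by
        refine Finset.sum_le_sum fun m hm => ?_
        simp only [mem_filter, mem_Ico] at hm
        exact (norm_lev_le f m).trans (hb m hm.1.1 hm.2)
    _ ≤ ∑ m ∈ Ico M n, ((3 * 0.99 ^ m + 1 / (n : ℝ) ^ 2)) :=
        Finset.sum_le_sum_of_subset_of_nonneg (filter_subset _ _) fun _ _ _ => by positivity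
    _ = 3 * ∑ m ∈ Ico M n, (0.99 : ℝ) ^ m + (n - M : ℕ) * (1 / (n : ℝ) ^ 2) := by
        rw [Finset.sum_add_distrib, ← Finset.mul_sum, Finset.sum_const, Nat.card_Ico, nsmul_eq_mul]
    _ ≤ 3 * (0.99 ^ M / (1 - 0.99)) + n * (1 / (n : ℝ) ^ 2) := by
        gcongr
        · exact geom_sum_Ico_le_of_lt_one (by norm_num) (by norm_num)
        · omega
    _ = _ := by field_simp; ring

/-- The complex form of the asymptotic for index types of the same cardinality as `G`. -/
lemma sum_tm_asymptotic (ε : ℝ) (hε : 0 < ε) : ∃ N : ℕ, ∀ (ι G : Type) [Fintype ι] [DecidableEq ι]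
    [AddCommGroup G] [Fintype G] [DecidableEq G], Fintype.card ι = Fintype.card G →
    N ≤ Fintype.card G → ∀ f : ι → G, ∑ i, f i = ∑ x : G, x →
    ‖(∑ χ : ι → AddChar G ℂ, tm f χ) / (Fintype.card G : ℂ) -
      (Real.exp (-(coll f / (2 * (Fintype.card G : ℝ) ^ 2))) : ℝ)‖ ≤ ε := by
  -- `L` is the number of terms of the exponential series that are compared level by level
  obtain ⟨L0, hL0⟩ := exists_pow_lt_of_lt_one (show 0 < ε / 1500 by positivity)
    (show (0.99 : ℝ) < 1 by norm_num)
  set L := max L0 24 with hLdef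
  have hLpow : (0.99 : ℝ) ^ L ≤ ε / 1500 :=
    (pow_le_pow_of_le_one (by norm_num) (by norm_num) (le_max_left _ _)).trans hL0.le
  have hL24 : 24 ≤ L := le_max_right _ _
  have h2Lpow : (0.99 : ℝ) ^ (2 * L) ≤ ε / 1500 :=
    (pow_le_pow_of_le_one (by norm_num) (by norm_num) (by omega)).trans hLpow
  have hLR : (0 : ℝ) < (2 * L : ℕ) := by exact_mod_cast (by omega)
  choose NL hNL using fun m : ℕ => lev_approx m (ε / 5 / (2 * L : ℕ)) (by positivity)
  obtain ⟨N1, hN1⟩ := bb_tail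
  obtain ⟨N2, hN2⟩ := sum_spread_le (ε / 5) (by positivity)
  obtain ⟨N3, hN3⟩ := exists_nat_ge (5 / ε)
  refine ⟨(range (2 * L)).sup NL + N1 + N2 + N3 + 1000 * (2 * L) + 1, ?_⟩
  intro ι G _ _ _ _ _ hc hn f hf
  set n := Fintype.card G with hndef
  have hn1 : 1 ≤ n := by omega
  have hnR : (1 : ℝ) ≤ n := by exact_mod_cast hn1
  have hnC : (n : ℂ) ≠ 0 := by exact_mod_cast (by omega : n ≠ 0)
  set s := coll f / (2 * (n : ℝ) ^ 2) with hs
  have hs0 : 0 ≤ s := by have := coll_nonneg f; positivity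
  have hs1 : s ≤ 1 / 2 := by
    rw [hs, div_le_iff₀ (by positivity)]
    have := coll_le f hc
    linarith
  rw [sum_tm_split hc f hf, ← hndef, major_split f (2 * L) (by omega), ← hndef]
  set A := ∑ m ∈ range (2 * L), lev f m with hA
  set B := ∑ m ∈ Ico (2 * L) n with 1000 * m < n, lev f m with hB
  set C := ∑ χ : ι → AddChar G ℂ with (∀ ψ, 1000 * cnt χ ψ ≤ 999 * n), tm f χ with hC
  have hB' : ‖B‖ ≤ 300 * 0.99 ^ (2 * L) + 1 / n :=
    tail_sum_le f (2 * L) n (by omega) fun m h1 h2 =>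
      hN1 ι G hc (by omega) m (by omega) (by omega)
  have hn5 : 1 / (n : ℝ) ≤ ε / 5 := by
    have h : 5 / ε ≤ n := hN3.trans (by exact_mod_cast (by omega))
    rw [div_le_iff₀ (by positivity)] at h ⊢
    linarith
  have hC' : ‖C / n‖ ≤ ε / 5 := by
    rw [norm_div, Complex.norm_natCast]
    have h1 : ‖C‖ ≤ ε / 5 := by
      refine (norm_sum_le _ _).trans ?_
      simp_rw [norm_tm]
      exact hN2 ι G hc (by omega)
    exact (div_le_self (norm_nonneg _) hnR).trans h1
  have hA' : ‖A - (∑ m ∈ range (2 * L), cc s m : ℝ)‖ ≤ ε / 5 := by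
    rw [hA, Complex.ofReal_sum, ← Finset.sum_sub_distrib]
    calc _ ≤ ∑ m ∈ range (2 * L), ‖lev f m - (cc s m : ℝ)‖ := norm_sum_le _ _
      _ ≤ ∑ m ∈ range (2 * L), ε / 5 / (2 * L : ℕ) := by
          refine Finset.sum_le_sum fun m hm => hNL m ι G hc ?_ f
          have := Finset.le_sup (f := NL) hm
          omega
      _ = ε / 5 := by
          rw [Finset.sum_const, card_range, nsmul_eq_mul]
          field_simp
  have hE : ‖((∑ m ∈ range (2 * L), cc s m : ℝ) : ℂ) - (Real.exp (-s) : ℝ)‖ ≤ 2 * 0.99 ^ L := by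
    rw [← Complex.ofReal_sub, Complex.norm_real]
    exact exp_tail s hs0 hs1 L (by omega)
  calc _ = ‖(A - (∑ m ∈ range (2 * L), cc s m : ℝ)) +
        (((∑ m ∈ range (2 * L), cc s m : ℝ) : ℂ) - (Real.exp (-s) : ℝ)) + (B + C / n)‖ := by
        congr 1
        field_simp
        ring
    _ ≤ ‖A - (∑ m ∈ range (2 * L), cc s m : ℝ)‖ +
        ‖((∑ m ∈ range (2 * L), cc s m : ℝ) : ℂ) - (Real.exp (-s) : ℝ)‖ + ‖B + C / n‖ :=
        norm_add₃_le
    _ ≤ ε / 5 + 2 * 0.99 ^ L + ((300 * 0.99 ^ (2 * L) + 1 / n) + ε / 5) := by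
        gcongr
        exact (norm_add_le _ _).trans (add_le_add hB' hC')
    _ ≤ ε := by linarith

end AddTriples

end

/-- For every `ε > 0` there exists `N` such that for all `n ≥ N`, every finite abelian group
`G` of order `n`, and every `f : Fin n → G` with `Σᵢ f i = Σ G`, the number `T` of additive
`f`-triples, i.e. triples `(π₁, π₂, π₃)` of bijections with `π₁ + π₂ + π₃ = f`, satisfies
`|T · n^{n-1}/(n!)³ − 𝔖(f)| ≤ ε`, where
`𝔖(f) = exp(−(1/(2n²)) Σ_{x ∈ G} |f⁻¹(x)|²)`. -/
theorem additive_f_triples_asymptotic :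
    ∀ ε : ℝ, 0 < ε → ∃ N : ℕ, ∀ n : ℕ, N ≤ n →
      ∀ (G : Type) [AddCommGroup G] [Fintype G], Fintype.card G = n →
        ∀ f : Fin n → G, (∑ i, f i) = (∑ x : G, x) →
        |(Nat.card {p : (Fin n → G) × (Fin n → G) × (Fin n → G) //
            Function.Bijective p.1 ∧ Function.Bijective p.2.1 ∧ Function.Bijective p.2.2 ∧
            p.1 + p.2.1 + p.2.2 = f} : ℝ) * (n : ℝ) ^ (n - 1) / (n.factorial : ℝ) ^ 3
          - Real.exp (-(1 / (2 * (n : ℝ) ^ 2)) * ∑ x : G, (fiberCard f x : ℝ) ^ 2)| ≤ ε := by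
  classical
  intro ε hε
  obtain ⟨N, hN⟩ := AddTriples.sum_tm_asymptotic ε hε
  refine ⟨N, ?_⟩
  intro n hn G _ _ hG f hf
  have hc : Fintype.card (Fin n) = Fintype.card G := by rw [Fintype.card_fin, hG]
  have h := hN (Fin n) G hc (by rw [hG]; exact hn) f hf
  rw [AddTriples.sum_tm hc, AddTriples.coll_eq, AddTriples.card_triples, hG] at h
  have hn0 : n ≠ 0 := by
    rw [← hG]; exact Fintype.card_ne_zero
  have hnC : (n : ℂ) ≠ 0 := by exact_mod_cast hn0
  have hp : (n : ℂ) ^ n = n ^ (n - 1) * n := (pow_sub_one_mul hn0 _).symm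
  set T := Nat.card {p : (Fin n → G) × (Fin n → G) × (Fin n → G) //
            Function.Bijective p.1 ∧ Function.Bijective p.2.1 ∧ Function.Bijective p.2.2 ∧
            p.1 + p.2.1 + p.2.2 = f}
  rw [← Real.norm_eq_abs, ← Complex.norm_real]
  refine le_of_eq_of_le ?_ h
  congr 1
  rw [hp, show -(1 / (2 * (n : ℝ) ^ 2)) * ∑ x : G, (fiberCard f x : ℝ) ^ 2 =
    -((∑ x : G, (fiberCard f x : ℝ) ^ 2) / (2 * (n : ℝ) ^ 2)) by ring, Complex.ofReal_sub]
  congr 1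
  push_cast
  field_simp
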